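/- arXiv:2203.01423 — 2 statements merged into one kernel-verified Lean document; each statement's English description precedes it below -/
import Mathlib

section
/- Let X = L ∪ J ∪ R be a continuum in the class 𝒞 and assume that L and R are local dendrites. Then every minimal set on X (i.e., every M ∈ 𝓜(X)) is either a finite set, or a cantoroid, or a union of finitely many pairwise disjoint circles. -/
/-!
Let `M` be an infinite minimal set of `f`; it has no isolated points, since an isolated point would
be periodic. If the degenerate components of `M` are dense, `M` is a cantoroid. Otherwise Baire's
theorem yields an open set over which all components of `M` have diameter at least some `η > 0`
(`exists_open_large_components`).

Shrinking that open set, the piece of `M` over it lies in a *tree-like* subspace `T` of `X`: in `J`,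
or in a connected open subset of `L` or `R` that contains no circle (locally path connected spaces
without circles have unique arcs, `uniqueArcs_of_no_circle`; that `L` and `R` are locally path
connected is `locallyPathConnectedSpace_of_compact`). By boundary bumping every point of `M` in `T`
lies in a connected subset of `M` that reaches the boundary of any small compact neighbourhood.
From this `UniqueArcs.arc_or_star` derives an alternative.

* Either `M` has a relatively open subset of the form `B \ {c}`, with `B` compact and star-shaped
  about `c`. Then `B` has the fixed point property (`UniqueArcs.exists_fixedPoint`). Collapsing the
  rest of `M` to `c` is a continuous retraction `r` of `M` onto `B`; some iterate of `c` returns to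
  `B \ {c}`, and a fixed point of `r` composed with this iterate is a periodic point of `f`, which
  is impossible in an infinite minimal set (`false_of_fixedPoint`).
* Or `M` contains a relatively open arc. A minimal map is irreducible, hence injective on open arcs
  as long as it maps them into open arcs, and it spreads the open arc to every point of `M`
  (`exists_openArc_through`). So `M` is a compact one-dimensional manifold, that is, a finite
  disjoint union of circles (`finUnionDisjCircles_of_openArcs`).
-/

open Set Topology

/-- A topological space has no isolated points if no singleton is open. -/
def NoIsolatedPoints (Y : Type*) [TopologicalSpace Y] : Prop :=
  ∀ y : Y, ¬ IsOpen ({y} : Set Y)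

/-- `(M, f|_M)` is a minimal dynamical system with `f(M) = M`:
`M` is nonempty, `f(M) = M`, and `M` has no nonempty proper closed subset
invariant under `f|_M`. -/
def MinimalSystemOn {Y : Type*} [TopologicalSpace Y] (f : Y → Y) (M : Set Y) : Prop :=
  M.Nonempty ∧ f '' M = M ∧
    ∀ N, N ⊆ M → N.Nonempty → IsClosed N → f '' N ⊆ N → N = M

/-- The system `𝓜(Y)` of all compact sets `M ⊆ Y` such that there is a continuous
`f : Y → Y` with `f(M) = M` and `(M, f|_M)` a minimal dynamical system. -/
def MSpace (Y : Type*) [TopologicalSpace Y] : Set (Set Y) :=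
  {M | IsCompact M ∧ ∃ f : Y → Y, Continuous f ∧ MinimalSystemOn f M}

/-- `𝓜(Z)` for a subspace `Z ⊆ X` (carrying the subspace topology),
viewed as a system of subsets of `X`. -/
def MSetIn {X : Type*} [TopologicalSpace X] (Z : Set X) : Set (Set X) :=
  {M | ∃ M' ∈ MSpace (↥Z), M = Subtype.val '' M'}

/-- `𝓜*(L; R)`: members of `𝓜(L ∪ R)` (`= 𝓜(L ⊔ R)` for disjoint `L, R`) such that
`M ∩ L` and `M ∩ R` have the same cardinality. -/
def MStarIn {X : Type*} [TopologicalSpace X] (L R : Set X) : Set (Set X) :=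
  {M | M ∈ MSetIn (L ∪ R) ∧ Cardinal.mk ↥(M ∩ L) = Cardinal.mk ↥(M ∩ R)}

/-- An arc: a set homeomorphic to `[0,1]`. -/
def IsArc {X : Type*} [TopologicalSpace X] (A : Set X) : Prop :=
  Nonempty (↥A ≃ₜ ↥(Set.Icc (0:ℝ) 1))

/-- A ray: a set homeomorphic to `[0,∞)`. -/
def IsRaySet {X : Type*} [TopologicalSpace X] (A : Set X) : Prop :=
  Nonempty (↥A ≃ₜ ↥(Set.Ici (0:ℝ)))

/-- A Cantor set: nonempty, compact, totally disconnected, without isolated points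
(metrizability is inherited from the ambient space). -/
def IsCantorSet {X : Type*} [TopologicalSpace X] (M : Set X) : Prop :=
  M.Nonempty ∧ IsCompact M ∧ IsTotallyDisconnected M ∧ NoIsolatedPoints ↥M

/-- A circle: a set homeomorphic to the unit circle `S¹ ⊆ ℂ`. -/
def IsCircleSet {X : Type*} [TopologicalSpace X] (C : Set X) : Prop :=
  Nonempty (↥C ≃ₜ ↥(Metric.sphere (0:ℂ) 1))

/-- A cantoroid: a nonempty compact (metrizable) set without isolated points in which
the union of the degenerate (singleton) connected components is dense. -/
def IsCantoroid {X : Type*} [TopologicalSpace X] (M : Set X) : Prop :=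
  M.Nonempty ∧ IsCompact M ∧ NoIsolatedPoints ↥M ∧
    Dense {x : ↥M | connectedComponent x = {x}}

/-- A union of finitely many (at least one) pairwise disjoint circles. -/
def FinUnionDisjCircles {X : Type*} [TopologicalSpace X] (M : Set X) : Prop :=
  ∃ (n : ℕ) (C : Fin n → Set X), 0 < n ∧ (∀ i, IsCircleSet (C i)) ∧
    Pairwise (Function.onFun Disjoint C) ∧ M = ⋃ i, C i

/-- A local dendrite: a locally connected continuum containing only finitely many circles. -/
def IsLocalDendrite {X : Type*} [TopologicalSpace X] (L : Set X) : Prop :=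
  IsCompact L ∧ IsConnected L ∧ LocallyConnectedSpace ↥L ∧
    {C : Set X | C ⊆ L ∧ IsCircleSet C}.Finite

/-- The decomposition `X = L ∪ J ∪ R` witnessing that the continuum `X` belongs to the
class `𝒞`: `J` is a free interval dense in `X`; `L` and `R` are locally connected
subcontinua of `X` disjoint from `J`; and there are rays `J_L, J_R` with
`J = J_L ∪ J_R` such that `L ∪ J_L` is a compactification of `J_L` and `R ∪ J_R` is a
compactification of `J_R`. -/
structure ClassC {X : Type*} [TopologicalSpace X] (L J R : Set X) : Prop where
  union_eq : L ∪ J ∪ R = Set.univ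
  openJ : IsOpen J
  freeJ : Nonempty (↥J ≃ₜ ↥(Set.Ioo (0:ℝ) 1))
  denseJ : Dense J
  compactL : IsCompact L
  connL : IsConnected L
  locConnL : LocallyConnectedSpace ↥L
  compactR : IsCompact R
  connR : IsConnected R
  locConnR : LocallyConnectedSpace ↥R
  disjLJ : Disjoint L J
  disjRJ : Disjoint R J
  rays : ∃ JL JR : Set X, JL ∪ JR = J ∧ IsRaySet JL ∧ IsRaySet JR ∧
    IsCompact (L ∪ JL) ∧ L ∪ JL ⊆ closure JL ∧
    IsCompact (R ∪ JR) ∧ R ∪ JR ⊆ closure JR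

/-! ### Circles from two arcs -/

/-- A continuous injective image of an additive circle is a circle. -/
theorem isCircleSet_range_of_addCircle {X : Type*} [TopologicalSpace X] [T2Space X] {p : ℝ}
    (hp : 0 < p) {g : AddCircle p → X} (hg : Continuous g) (hinj : Function.Injective g) :
    IsCircleSet (range g) := by
  have : Fact (0 < p) := ⟨hp⟩
  let e₁ : AddCircle p ≃ₜ ↥(range g) :=
    Continuous.homeoOfEquivCompactToT2 (f := Equiv.ofInjective g hinj)
      (hg.subtype_mk _)
  let e₂ : AddCircle p ≃ₜ Circle := AddCircle.homeomorphCircle hp.ne'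
  let e₃ : Circle ≃ₜ ↥(Metric.sphere (0:ℂ) 1) :=
    { toFun := fun z => ⟨(z : ℂ), by simp [Circle.norm_coe]⟩
      invFun := fun z => ⟨(z : ℂ), by
        simp [Submonoid.unitSphere]⟩
      left_inv := fun z => by ext; rfl
      right_inv := fun z => by ext; rfl
      continuous_toFun := by fun_prop
      continuous_invFun := by fun_prop }
  exact ⟨(e₁.symm.trans e₂).trans e₃⟩

/-- Two arcs that meet exactly in their end points, the end of each being the start of the other,
form a circle. -/
theorem isCircleSet_union_arcs {X : Type*} [TopologicalSpace X] [T2Space X] {α β : ℝ → X}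
    {a b c d : ℝ} (hα : Continuous α) (hβ : Continuous β) (hab : a < b) (hcd : c < d)
    (iα : InjOn α (Icc a b)) (iβ : InjOn β (Icc c d)) (h1 : α b = β c) (h2 : β d = α a)
    (hd : ∀ s ∈ Icc a b, ∀ t ∈ Icc c d, α s = β t → (s = b ∧ t = c) ∨ (s = a ∧ t = d)) :
    IsCircleSet (α '' Icc a b ∪ β '' Icc c d) := by
  set p := (b - a) + (d - c) with hp
  have hp0 : 0 < p := by linarith
  have : Fact (0 < p) := ⟨hp0⟩
  let ℓ : ℝ → X := fun u => if u ≤ b then α u else β (u - b + c)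
  have hℓ : Continuous ℓ := by
    refine Continuous.if_le hα (by fun_prop) continuous_id continuous_const ?_
    intro x hx
    subst hx
    simp [h1]
  have hend : ℓ a = ℓ (a + p) := by
    have e1 : ℓ a = α a := if_pos hab.le
    have e2 : ℓ (a + p) = β d := by
      have : ¬ (a + p ≤ b) := by rw [hp]; linarith
      simp only [ℓ, if_neg this]; congr 1; rw [hp]; ring
    rw [e1, e2, h2]
  have hval : ∀ x ∈ Ico a (a + p), AddCircle.liftIco p a ℓ (x : AddCircle p) = ℓ x :=
    fun x hx => AddCircle.liftIco_coe_apply hx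
  have hsurj : ∀ z : AddCircle p, ∃ x ∈ Ico a (a + p), (x : AddCircle p) = z := by
    intro z
    have := AddCircle.coe_image_Ico_eq p a
    have hz : z ∈ ((↑) : ℝ → AddCircle p) '' Ico a (a + p) := by rw [this]; trivial
    exact hz
  have hinjℓ : InjOn ℓ (Ico a (a + p)) := by
    have key : ∀ x ∈ Ico a (a + p), ∀ y ∈ Ico a (a + p), x ≤ b → ¬ y ≤ b → ℓ x ≠ ℓ y := by
      intro x hx y hy hxb hyb hxy
      simp only [ℓ, if_pos hxb, if_neg hyb] at hxy
      rw [not_le] at hyb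
      have hy2 := hy.2
      rcases hd x ⟨hx.1, hxb⟩ (y - b + c) ⟨by linarith, by rw [hp] at hy2; linarith⟩ hxy with h | h
      · linarith [h.2]
      · rw [hp] at hy2; linarith [h.2]
    intro x hx y hy hxy
    by_cases hxb : x ≤ b <;> by_cases hyb : y ≤ b
    · simp only [ℓ, if_pos hxb, if_pos hyb] at hxy
      exact iα ⟨hx.1, hxb⟩ ⟨hy.1, hyb⟩ hxy
    · exact (key x hx y hy hxb hyb hxy).elim
    · exact (key y hy x hx hyb hxb hxy.symm).elim
    · simp only [ℓ, if_neg hxb, if_neg hyb] at hxy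
      rw [not_le] at hxb hyb
      have hx2 := hx.2
      have hy2 := hy.2
      rw [hp] at hx2 hy2
      have := iβ ⟨by linarith, by linarith⟩ ⟨by linarith, by linarith⟩ hxy
      linarith
  have hcont : Continuous (AddCircle.liftIco p a ℓ) :=
    AddCircle.liftIco_continuous hend hℓ.continuousOn
  have hinj : Function.Injective (AddCircle.liftIco p a ℓ) := by
    intro z w hzw
    obtain ⟨x, hx, rfl⟩ := hsurj z
    obtain ⟨y, hy, rfl⟩ := hsurj w
    rw [hval x hx, hval y hy] at hzw
    rw [hinjℓ hx hy hzw]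
  have hrange : range (AddCircle.liftIco p a ℓ) = α '' Icc a b ∪ β '' Icc c d := by
    apply Subset.antisymm
    · rintro _ ⟨z, rfl⟩
      obtain ⟨x, hx, rfl⟩ := hsurj z
      rw [hval x hx]
      by_cases hxb : x ≤ b
      · simp only [ℓ, if_pos hxb]
        exact Or.inl ⟨x, ⟨hx.1, hxb⟩, rfl⟩
      · simp only [ℓ, if_neg hxb]
        have hx2 := hx.2
        rw [hp] at hx2
        exact Or.inr ⟨_, ⟨by linarith, by linarith⟩, rfl⟩
    · rintro _ (⟨x, hx, rfl⟩ | ⟨t, ht, rfl⟩)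
      · refine ⟨(x : AddCircle p), ?_⟩
        rw [hval x ⟨hx.1, by linarith [hx.2]⟩]
        exact if_pos hx.2
      · rcases eq_or_lt_of_le ht.1 with rfl | h
        · refine ⟨(b : AddCircle p), ?_⟩
          rw [hval b ⟨hab.le, by linarith⟩, ← h1]
          exact if_pos le_rfl
        · rcases eq_or_lt_of_le ht.2 with rfl | h'
          · refine ⟨(a : AddCircle p), ?_⟩
            rw [hval a ⟨le_rfl, by linarith⟩, h2]
            exact if_pos hab.le
          · refine ⟨((t - c + b : ℝ) : AddCircle p), ?_⟩
            rw [hval _ ⟨by linarith, by linarith⟩]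
            simp only [ℓ]
            rw [if_neg (by linarith)]
            congr 1; ring
  rw [← hrange]
  exact isCircleSet_range_of_addCircle hp0 hcont hinj

/-! ### Arcs inside paths -/

/-- A closed set of parameters containing `0` and `1` such that `p` takes equal values at the two ends
of each of its gaps; collapsing the gaps keeps `p` a path. -/
structure GapSet {X : Type*} (p : ℝ → X) (A : Set ℝ) : Prop where
  closed : IsClosed A
  sub : A ⊆ Icc 0 1
  zero_mem : (0:ℝ) ∈ A
  one_mem : (1:ℝ) ∈ A
  gap : ∀ a ∈ A, ∀ b ∈ A, a < b → Ioo a b ∩ A = ∅ → p a = p b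

theorem exists_minimal_gapSet {X : Type*} [TopologicalSpace X] [T2Space X] {p : ℝ → X}
    (hp : Continuous p) : ∃ A, GapSet p A ∧
      ∀ s ∈ A, ∀ t ∈ A, s < t → p s = p t → Ioo s t ∩ A = ∅ := by
  have hI : GapSet p (Icc 0 1) := by
    refine ⟨isClosed_Icc, Subset.rfl, by simp, by simp, ?_⟩
    intro a ha b hb hab h
    exfalso
    have : (a + b) / 2 ∈ Ioo a b ∩ Icc (0:ℝ) 1 :=
      ⟨⟨by linarith, by linarith⟩, by linarith [ha.1, hb.1], by linarith [ha.2, hb.2]⟩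
    rw [h] at this; exact this
  obtain ⟨A, -, hA⟩ := zorn_superset_nonempty {A | GapSet p A} (by
    intro c hc hchain hne
    obtain ⟨A₀, hA₀⟩ := hne
    refine ⟨⋂₀ c, ?_, fun s hs => sInter_subset_of_mem hs⟩
    have hcl : IsClosed (⋂₀ c) := isClosed_sInter fun A hA => (hc hA).closed
    refine ⟨hcl, (sInter_subset_of_mem hA₀).trans (hc hA₀).sub,
      fun A hA => (hc hA).zero_mem, fun A hA => (hc hA).one_mem, ?_⟩
    intro a ha b hb hab hgap
    -- a gap of the intersection is the limit of gaps of members of the chain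
    have key : ∀ ε > 0, ε < (b - a) / 2 → ∃ a' b', a ≤ a' ∧ a' ≤ a + ε ∧ b - ε ≤ b' ∧ b' ≤ b ∧
        p a' = p b' := by
      intro ε hε hε2
      have hne' : ∃ A ∈ c, Icc (a + ε) (b - ε) ∩ A = ∅ := by
        by_contra hcon
        push Not at hcon
        have : Nonempty c := ⟨⟨A₀, hA₀⟩⟩
        have := IsCompact.nonempty_iInter_of_directed_nonempty_isCompact_isClosed
          (fun A : c => Icc (a + ε) (b - ε) ∩ (A : Set ℝ))
          (by
            intro A B
            rcases hchain.total A.2 B.2 with h | h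
            · exact ⟨A, Subset.rfl, inter_subset_inter_right _ h⟩
            · exact ⟨B, inter_subset_inter_right _ h, Subset.rfl⟩)
          (fun A => hcon A A.2)
          (fun A => isCompact_Icc.inter_right (hc A.2).closed)
          (fun A => isClosed_Icc.inter (hc A.2).closed)
        obtain ⟨r, hr⟩ := this
        rw [mem_iInter] at hr
        have h1 := (hr ⟨A₀, hA₀⟩).1
        have : r ∈ Ioo a b ∩ ⋂₀ c :=
          ⟨⟨by linarith [h1.1], by linarith [h1.2]⟩, fun A hA => (hr ⟨A, hA⟩).2⟩
        rw [hgap] at this; exact this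
      obtain ⟨A, hAc, hAe⟩ := hne'
      have hAg := hc hAc
      have c1 : IsCompact (A ∩ Icc a (a + ε)) := isCompact_Icc.inter_left hAg.closed
      have c2 : IsCompact (A ∩ Icc (b - ε) b) := isCompact_Icc.inter_left hAg.closed
      obtain ⟨a', ha', hmax⟩ := c1.exists_isGreatest ⟨a, ha A hAc, le_rfl, by linarith⟩
      obtain ⟨b', hb', hmin⟩ := c2.exists_isLeast ⟨b, hb A hAc, by linarith, le_rfl⟩
      refine ⟨a', b', ha'.2.1, ha'.2.2, hb'.2.1, hb'.2.2, ?_⟩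
      apply hAg.gap a' ha'.1 b' hb'.1 (by linarith [ha'.2.2, hb'.2.1])
      rw [eq_empty_iff_forall_notMem]
      rintro r ⟨⟨hr1, hr2⟩, hrA⟩
      by_cases h1 : r ≤ a + ε
      · have := hmax ⟨hrA, by linarith [ha'.2.1], h1⟩; linarith
      · by_cases h2 : b - ε ≤ r
        · have := hmin ⟨hrA, h2, by linarith [hb'.2.2]⟩; linarith
        · have : r ∈ Icc (a + ε) (b - ε) ∩ A := ⟨⟨by linarith, by linarith⟩, hrA⟩
          rw [hAe] at this; exact this
    by_contra hne
    obtain ⟨U, V, hU, hV, haU, hbV, hUV⟩ := t2_separation hne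
    obtain ⟨ε₁, hε₁, h₁⟩ := Metric.isOpen_iff.1 (hU.preimage hp) a haU
    obtain ⟨ε₂, hε₂, h₂⟩ := Metric.isOpen_iff.1 (hV.preimage hp) b hbV
    set ε := min (min ε₁ ε₂) ((b - a) / 2) / 2 with hεdef
    have hm : 0 < min (min ε₁ ε₂) ((b - a) / 2) :=
      lt_min (lt_min hε₁ hε₂) (by linarith)
    have e1 : min (min ε₁ ε₂) ((b - a) / 2) ≤ ε₁ := (min_le_left _ _).trans (min_le_left _ _)
    have e2 : min (min ε₁ ε₂) ((b - a) / 2) ≤ ε₂ := (min_le_left _ _).trans (min_le_right _ _)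
    have e3 : min (min ε₁ ε₂) ((b - a) / 2) ≤ (b - a) / 2 := min_le_right _ _
    obtain ⟨a', b', g1, g2, g3, g4, g5⟩ := key ε (by linarith) (by linarith)
    have ha' : p a' ∈ U := h₁ (by
      rw [Metric.mem_ball, Real.dist_eq, abs_lt]; constructor <;> linarith)
    have hb' : p b' ∈ V := h₂ (by
      rw [Metric.mem_ball, Real.dist_eq, abs_lt]; constructor <;> linarith)
    rw [g5] at ha'
    exact disjoint_left.1 hUV ha' hb') (Icc 0 1) hI
  refine ⟨A, hA.prop, ?_⟩
  intro s hs t ht hst hpst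
  have hAg : GapSet p A := hA.prop
  have hnew : GapSet p (A \ Ioo s t) := by
    refine ⟨hAg.closed.sdiff isOpen_Ioo, sdiff_subset.trans hAg.sub,
      ⟨hAg.zero_mem, fun h => ?_⟩, ⟨hAg.one_mem, fun h => ?_⟩, ?_⟩
    · linarith [h.1, (hAg.sub hs).1]
    · linarith [h.2, (hAg.sub ht).2]
    intro a ha b hb hab hgap
    by_cases hemp : Ioo a b ∩ A = ∅
    · exact hAg.gap a ha.1 b hb.1 hab hemp
    · obtain ⟨r, hr, hrA⟩ := nonempty_iff_ne_empty.2 hemp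
      have hrst : r ∈ Ioo s t := by
        by_contra hcon
        have : r ∈ Ioo a b ∩ (A \ Ioo s t) := ⟨hr, hrA, hcon⟩
        rw [hgap] at this; exact this
      have has : a ≤ s := by
        by_contra h; exact ha.2 ⟨not_le.1 h, hr.1.trans hrst.2⟩
      have hbt : t ≤ b := by
        by_contra h; exact hb.2 ⟨hrst.1.trans hr.2, not_le.1 h⟩
      have has' : a = s := by
        by_contra h
        have : s ∈ Ioo a b ∩ (A \ Ioo s t) :=
          ⟨⟨lt_of_le_of_ne has h, hst.trans_le hbt⟩, hs, fun h => lt_irrefl _ h.1⟩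
        rw [hgap] at this; exact this
      have hbt' : b = t := by
        by_contra h
        have : t ∈ Ioo a b ∩ (A \ Ioo s t) :=
          ⟨⟨has.trans_lt hst, lt_of_le_of_ne hbt (Ne.symm h)⟩, ht, fun h => lt_irrefl _ h.2⟩
        rw [hgap] at this; exact this
      rw [has', hbt', hpst]
  have := hA.le_of_le hnew sdiff_subset
  rw [eq_empty_iff_forall_notMem]
  rintro r ⟨hr, hrA⟩
  exact (this hrA).2 hr

/-- Every path can be replaced by one that is monotone in the sense that its fibres are intervals. -/
theorem exists_monotone_path {X : Type*} [MetricSpace X] {p : ℝ → X}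
    (hp : Continuous p) : ∃ q : ℝ → X, ContinuousOn q (Icc 0 1) ∧ q 0 = p 0 ∧ q 1 = p 1 ∧
      (∀ t ∈ Icc (0:ℝ) 1, q t ∈ p '' Icc 0 1) ∧
      ∀ s ∈ Icc (0:ℝ) 1, ∀ t ∈ Icc (0:ℝ) 1, s ≤ t → q s = q t → ∀ r ∈ Icc s t, q r = q t := by
  obtain ⟨A, hA, hmin⟩ := exists_minimal_gapSet hp
  have hG : ∀ t ∈ Icc (0:ℝ) 1, IsGreatest (A ∩ Iic t) (sSup (A ∩ Iic t)) := by
    intro t ht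
    have hne : (A ∩ Iic t).Nonempty := ⟨0, hA.zero_mem, ht.1⟩
    have hbd : BddAbove (A ∩ Iic t) := ⟨t, fun x hx => hx.2⟩
    exact ⟨(hA.closed.inter isClosed_Iic).csSup_mem hne hbd, fun x hx => le_csSup hbd hx⟩
  set σ : ℝ → ℝ := fun t => sSup (A ∩ Iic t) with hσ
  have hσA : ∀ t ∈ Icc (0:ℝ) 1, σ t ∈ A := fun t ht => (hG t ht).1.1
  have hσle : ∀ t ∈ Icc (0:ℝ) 1, σ t ≤ t := fun t ht => (hG t ht).1.2
  have hσmax : ∀ t ∈ Icc (0:ℝ) 1, ∀ r ∈ A, r ≤ t → r ≤ σ t :=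
    fun t ht r hr hrt => (hG t ht).2 ⟨hr, hrt⟩
  have hσid : ∀ t ∈ A, σ t = t := fun t ht =>
    le_antisymm (hσle t (hA.sub ht)) (hσmax t (hA.sub ht) t ht le_rfl)
  have hσmono : ∀ s ∈ Icc (0:ℝ) 1, ∀ t ∈ Icc (0:ℝ) 1, s ≤ t → σ s ≤ σ t :=
    fun s hs t ht hst => hσmax t ht _ (hσA s hs) ((hσle s hs).trans hst)
  refine ⟨p ∘ σ, ?_, ?_, ?_, ?_, ?_⟩
  · intro t ht
    rw [Metric.continuousWithinAt_iff]
    intro ε hε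
    by_cases htA : t ∈ A
    · obtain ⟨δ, hδ, hd⟩ := Metric.continuous_iff.1 hp t ε hε
      simp only [Function.comp, hσid t htA]
      -- below `t` either `A` has a point close to `t` or `t` is the right end of a gap
      by_cases hl : ∃ r ∈ A, t - δ < r ∧ r < t
      · obtain ⟨r, hrA, hr1, hr2⟩ := hl
        refine ⟨t - r, by linarith, fun s hs hst => hd _ ?_⟩
        rw [Real.dist_eq, abs_lt] at hst ⊢
        have h1 := hσmax s hs r hrA (by linarith)
        have h2 := hσle s hs
        refine ⟨by linarith, by linarith⟩
      · push Not at hl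
        refine ⟨δ, hδ, fun s hs hst => ?_⟩
        rw [Real.dist_eq, abs_lt] at hst
        rcases le_or_gt t s with h | h
        · apply hd
          have h1 := hσmax s hs t htA h
          have h2 := hσle s hs
          rw [Real.dist_eq, abs_lt]
          refine ⟨by linarith, by linarith⟩
        · have : p (σ s) = p t := by
            apply hA.gap _ (hσA s hs) _ htA ((hσle s hs).trans_lt h)
            rw [eq_empty_iff_forall_notMem]
            rintro r ⟨hr, hrA⟩
            by_cases hrs : r ≤ s
            · linarith [hσmax s hs r hrA hrs, hr.1]
            · linarith [hl r hrA (by linarith), hr.2]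
          rw [this, dist_self]; exact hε
    · obtain ⟨δ, hδ, hd⟩ := Metric.isOpen_iff.1 hA.closed.isOpen_compl t htA
      refine ⟨δ, hδ, fun s hs hst => ?_⟩
      have : σ s = σ t := by
        have hnot : ∀ r, |r - t| < δ → r ∉ A := fun r hr => hd (by
          rwa [Metric.mem_ball, Real.dist_eq])
        rw [Real.dist_eq, abs_lt] at hst
        have hσs : σ s ≤ t := by
          by_contra h
          refine hnot (σ s) ?_ (hσA s hs)
          rw [abs_lt]; constructor <;> linarith [hσle s hs]
        have hσt : σ t ≤ s := by
          by_contra h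
          refine hnot (σ t) ?_ (hσA t ht)
          rw [abs_lt]; constructor <;> linarith [hσle t ht]
        exact le_antisymm (hσmax t ht _ (hσA s hs) hσs) (hσmax s hs _ (hσA t ht) hσt)
      simp only [Function.comp, this, dist_self]
      exact hε
  · simp only [Function.comp, hσid 0 hA.zero_mem]
  · simp only [Function.comp, hσid 1 hA.one_mem]
  · exact fun t ht => ⟨σ t, hA.sub (hσA t ht), rfl⟩
  · intro s hs t ht hst hq r hr
    have hr' : r ∈ Icc (0:ℝ) 1 := ⟨hs.1.trans hr.1, hr.2.trans ht.2⟩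
    have h1 := hσmono s hs r hr' hr.1
    have h2 := hσmono r hr' t ht hr.2
    simp only [Function.comp] at hq ⊢
    rcases eq_or_lt_of_le h1 with h1 | h1
    · rw [← h1, hq]
    rcases eq_or_lt_of_le h2 with h2 | h2
    · rw [h2]
    have := hmin _ (hσA s hs) _ (hσA t ht) (h1.trans h2) hq
    have hh : σ r ∈ Ioo (σ s) (σ t) ∩ A := ⟨⟨h1, h2⟩, hσA r hr'⟩
    rw [this] at hh
    exact hh.elim

/-- Points joined by a path are joined by an arc inside that path. The arc is a monotone path
reparametrized by `m t = -∑ 2⁻ⁿ d(cₙ, q[0,t])`, for `cₙ` dense, which is constant exactly where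
`q` is. -/
theorem exists_arc_of_path {X : Type*} [MetricSpace X] {p : ℝ → X}
    (hp : Continuous p) (hne : p 0 ≠ p 1) : ∃ γ : ℝ → X, Continuous γ ∧ InjOn γ (Icc 0 1) ∧
      γ 0 = p 0 ∧ γ 1 = p 1 ∧ range γ ⊆ p '' Icc 0 1 := by
  obtain ⟨q₀, hq₀, h0, h1, hsub₀, hfib₀⟩ := exists_monotone_path hp
  set q : ℝ → X := fun t => q₀ (projIcc (0:ℝ) 1 zero_le_one t) with hqdef
  have hq : Continuous q :=
    hq₀.comp_continuous (continuous_subtype_val.comp continuous_projIcc) fun t => Subtype.coe_prop _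
  have hqq : ∀ t ∈ Icc (0:ℝ) 1, q t = q₀ t := fun t ht => by
    simp only [hqdef, projIcc_of_mem zero_le_one ht]
  have hfib : ∀ s ∈ Icc (0:ℝ) 1, ∀ t ∈ Icc (0:ℝ) 1, s ≤ t → q s = q t →
      ∀ r ∈ Icc s t, q r = q t := by
    intro s hs t ht hst h r hr
    rw [hqq s hs, hqq t ht] at h
    rw [hqq r ⟨hs.1.trans hr.1, hr.2.trans ht.2⟩, hqq t ht]
    exact hfib₀ s hs t ht hst h r hr
  have m0 : (0:ℝ) ∈ Icc (0:ℝ) 1 := by simp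
  have m1 : (1:ℝ) ∈ Icc (0:ℝ) 1 := by simp
  have hq0 : q 0 = p 0 := by rw [hqq 0 m0, h0]
  have hq1 : q 1 = p 1 := by rw [hqq 1 m1, h1]
  have hsub : ∀ t, q t ∈ p '' Icc 0 1 := fun t => hsub₀ _ (Subtype.coe_prop _)
  let c : ℕ → X := fun n => q (TopologicalSpace.denseSeq ℝ n)
  let d : ℕ → ℝ → ℝ := fun n t => sInf ((fun u => dist (c n) (q (t * u))) '' Icc 0 1)
  have hdc : ∀ n, Continuous (d n) := fun n =>
    isCompact_Icc.continuous_sInf (f := fun t u => dist (c n) (q (t * u)))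
      (continuous_const.dist (hq.comp (continuous_fst.mul continuous_snd)))
  have L1 : ∀ n t v, 0 ≤ v → v ≤ t → d n t ≤ dist (c n) (q v) := by
    intro n t v hv hvt
    apply csInf_le ⟨0, by rintro _ ⟨u, -, rfl⟩; exact dist_nonneg⟩
    rcases eq_or_lt_of_le hv with rfl | hv
    · exact ⟨0, m0, by simp⟩
    · have ht : 0 < t := hv.trans_le hvt
      refine ⟨v / t, ⟨by positivity, by rw [div_le_one ht]; exact hvt⟩, ?_⟩
      simp only
      rw [mul_div_cancel₀ _ ht.ne']
  have L2 : ∀ n t, 0 ≤ t → ∃ v, 0 ≤ v ∧ v ≤ t ∧ d n t = dist (c n) (q v) := by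
    intro n t ht
    obtain ⟨u, hu, h⟩ := isCompact_Icc.exists_sInf_image_eq (s := Icc (0:ℝ) 1) ⟨0, m0⟩
      (f := fun u => dist (c n) (q (t * u))) (by fun_prop)
    exact ⟨t * u, mul_nonneg ht hu.1, mul_le_of_le_one_right ht hu.2, h⟩
  have hanti : ∀ n s t, 0 ≤ s → s ≤ t → d n t ≤ d n s := by
    intro n s t hs hst
    obtain ⟨v, hv, hvs, h⟩ := L2 n s hs
    rw [h]; exact L1 n t v hv (hvs.trans hst)
  obtain ⟨D, hD⟩ : ∃ D, ∀ s t, dist (q s) (q t) ≤ D := by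
    have hb : Bornology.IsBounded (p '' Icc 0 1) := (isCompact_Icc.image hp).isBounded
    obtain ⟨D, hD⟩ := Metric.isBounded_iff.1 hb
    exact ⟨D, fun s t => hD (hsub s) (hsub t)⟩
  have hdn : ∀ n t, 0 ≤ d n t := fun n t => Real.sInf_nonneg (by
    rintro _ ⟨u, -, rfl⟩; exact dist_nonneg)
  have hdD : ∀ n t, d n t ≤ D := fun n t => by
    have hb : BddBelow ((fun u => dist (c n) (q (t * u))) '' Icc 0 1) :=
      ⟨0, by rintro _ ⟨u, -, rfl⟩; exact dist_nonneg⟩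
    exact (csInf_le hb ⟨0, m0, rfl⟩).trans (hD _ _)
  have hbound : ∀ n t, ‖(1 / 2 : ℝ) ^ n * d n t‖ ≤ (1 / 2 : ℝ) ^ n * D := fun n t => by
    rw [Real.norm_of_nonneg (mul_nonneg (by positivity) (hdn n t))]
    exact mul_le_mul_of_nonneg_left (hdD n t) (by positivity)
  have hsumD : Summable fun n : ℕ => (1 / 2 : ℝ) ^ n * D := summable_geometric_two.mul_right D
  have hsum : ∀ t, Summable fun n => (1 / 2 : ℝ) ^ n * d n t := fun t =>
    Summable.of_norm_bounded hsumD fun n => hbound n t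
  let m : ℝ → ℝ := fun t => ∑' n, (1 / 2 : ℝ) ^ n * d n t
  have hm : Continuous m :=
    continuous_tsum (fun n => continuous_const.mul (hdc n)) hsumD hbound
  have hmlt : ∀ s ∈ Icc (0:ℝ) 1, ∀ t ∈ Icc (0:ℝ) 1, s ≤ t → q s ≠ q t → m t < m s := by
    intro s hs t ht hst hqst
    have hnot : q t ∉ q '' Icc 0 s := by
      rintro ⟨v, hv, hvt⟩
      exact hqst (hfib v ⟨hv.1, hv.2.trans hs.2⟩ t ht (hv.2.trans hst) hvt s ⟨hv.2, hst⟩)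
    have hcl : IsClosed (q '' Icc 0 s) := (isCompact_Icc.image hq).isClosed
    obtain ⟨ε, hε, hball⟩ := Metric.isOpen_iff.1 hcl.isOpen_compl (q t) hnot
    obtain ⟨n, hn⟩ : ∃ n, dist (c n) (q t) < ε / 2 := by
      have ho : IsOpen (q ⁻¹' Metric.ball (q t) (ε / 2)) := Metric.isOpen_ball.preimage hq
      exact (TopologicalSpace.denseRange_denseSeq ℝ).exists_mem_open ho
        ⟨t, Metric.mem_ball_self (half_pos hε)⟩
    refine Summable.tsum_lt_tsum (i := n) (fun k => ?_) ?_ (hsum t) (hsum s)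
    · exact mul_le_mul_of_nonneg_left (hanti k s t hs.1 hst) (by positivity)
    · refine mul_lt_mul_of_pos_left ?_ (by positivity)
      obtain ⟨v, hv, hvs, h⟩ := L2 n s hs.1
      have h3 := L1 n t t ht.1 le_rfl
      have h4 : ε ≤ dist (q v) (q t) := by
        by_contra hlt
        exact hball (Metric.mem_ball.2 (not_le.1 hlt)) ⟨v, ⟨hv, hvs⟩, rfl⟩
      have h5 := dist_triangle_left (q v) (q t) (c n)
      rw [h]; linarith
  have hmeq : ∀ s ∈ Icc (0:ℝ) 1, ∀ t ∈ Icc (0:ℝ) 1, s ≤ t → q s = q t → m s = m t := by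
    intro s hs t ht hst hqst
    refine tsum_congr fun n => ?_
    congr 1
    refine le_antisymm ?_ (hanti n s t hs.1 hst)
    obtain ⟨v, hv, hvt, h⟩ := L2 n t ht.1
    rw [h]
    rcases le_total v s with hvs | hvs
    · exact L1 n s v hv hvs
    · rw [hfib s hs t ht hst hqst v ⟨hvs, hvt⟩, ← hqst]
      exact L1 n s s hs.1 le_rfl
  have hm01 : m 1 < m 0 := hmlt 0 m0 1 m1 zero_le_one (by rw [hq0, hq1]; exact hne)
  have hmle : ∀ s ∈ Icc (0:ℝ) 1, ∀ t ∈ Icc (0:ℝ) 1, s ≤ t → m t ≤ m s := by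
    intro s hs t ht hst
    by_cases h : q s = q t
    · exact (hmeq s hs t ht hst h).ge
    · exact (hmlt s hs t ht hst h).le
  have hiff : ∀ s ∈ Icc (0:ℝ) 1, ∀ t ∈ Icc (0:ℝ) 1, m s = m t ↔ q s = q t := by
    intro s hs t ht
    rcases le_total s t with h | h
    · exact ⟨fun e => by_contra fun hn => (hmlt s hs t ht h hn).ne e.symm, hmeq s hs t ht h⟩
    · exact ⟨fun e => by_contra fun hn => (hmlt t ht s hs h (Ne.symm hn)).ne e,
        fun e => (hmeq t ht s hs h e.symm).symm⟩
  have hpos : 0 < m 0 - m 1 := by linarith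
  let w : ↥(Icc (0:ℝ) 1) → ↥(Icc (0:ℝ) 1) := fun t => ⟨(m 0 - m t) / (m 0 - m 1), by
    have g1 := hmle 0 m0 t t.2 t.2.1
    have g2 := hmle t t.2 1 m1 t.2.2
    exact ⟨div_nonneg (by linarith) hpos.le, by rw [div_le_one hpos]; linarith⟩⟩
  have hw : Continuous w := by
    refine Continuous.subtype_mk ?_ _
    exact (continuous_const.sub (hm.comp continuous_subtype_val)).div_const _
  have hwsurj : Function.Surjective w := by
    intro u
    have : m 0 - u * (m 0 - m 1) ∈ m '' Icc 0 1 := by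
      apply intermediate_value_Icc' zero_le_one hm.continuousOn
      constructor <;> nlinarith [u.2.1, u.2.2]
    obtain ⟨t, ht, hmt⟩ := this
    refine ⟨⟨t, ht⟩, Subtype.ext ?_⟩
    simp only [w, hmt]
    field_simp
    ring
  have hwiff : ∀ s t, w s = w t ↔ q s = q t := by
    intro s t
    rw [← hiff s s.2 t t.2, Subtype.ext_iff]
    simp only [w]
    rw [div_left_inj' hpos.ne']
    constructor <;> intro h <;> linarith
  have hquot : Topology.IsQuotientMap w := hw.isClosedMap.isQuotientMap hw hwsurj
  let q' : C(↥(Icc (0:ℝ) 1), X) := ⟨fun t => q t, hq.comp continuous_subtype_val⟩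
  have hq' : ∀ s t, w s = w t → q' s = q' t := fun s t h => (hwiff s t).1 h
  let g : C(↥(Icc (0:ℝ) 1), X) := hquot.lift (f := ⟨w, hw⟩) q' hq'
  have hg : ∀ t, g (w t) = q t := fun t =>
    DFunLike.congr_fun (hquot.lift_comp (f := ⟨w, hw⟩) q' hq') t
  have hginj : Function.Injective g := by
    intro u v huv
    obtain ⟨s, rfl⟩ := hwsurj u
    obtain ⟨t, rfl⟩ := hwsurj v
    rw [hg, hg] at huv
    exact (hwiff s t).2 huv
  have w0 : w ⟨0, m0⟩ = ⟨0, m0⟩ := Subtype.ext (by simp [w])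
  have w1 : w ⟨1, m1⟩ = ⟨1, m1⟩ := Subtype.ext (by simp [w, hpos.ne'])
  refine ⟨IccExtend zero_le_one g, g.continuous.Icc_extend', ?_, ?_, ?_, ?_⟩
  · intro u hu v hv huv
    rw [IccExtend_of_mem _ _ hu, IccExtend_of_mem _ _ hv] at huv
    exact congrArg Subtype.val (hginj huv)
  · rw [IccExtend_of_mem _ _ m0, ← w0, hg, hq0]
  · rw [IccExtend_of_mem _ _ m1, ← w1, hg, hq1]
  · rw [IccExtend_range]
    rintro _ ⟨u, rfl⟩
    obtain ⟨s, rfl⟩ := hwsurj u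
    rw [hg]; exact hsub s

/-! ### Compact locally connected metric spaces are locally path connected -/

/-- `x` and `y` lie in a common connected set of diameter at most `ε`. -/
def ConnNear {Y : Type*} [MetricSpace Y] (ε : ℝ) (x y : Y) : Prop :=
  ∃ C : Set Y, IsPreconnected C ∧ x ∈ C ∧ y ∈ C ∧ ∀ a ∈ C, ∀ b ∈ C, dist a b ≤ ε

theorem ConnNear.dist_le {Y : Type*} [MetricSpace Y] {ε : ℝ} {x y : Y} (h : ConnNear ε x y) :
    dist x y ≤ ε := by
  obtain ⟨C, -, hx, hy, h⟩ := h
  exact h x hx y hy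

theorem ConnNear.rfl' {Y : Type*} [MetricSpace Y] {ε : ℝ} (hε : 0 ≤ ε) (x : Y) :
    ConnNear ε x x :=
  ⟨{x}, isPreconnected_singleton, rfl, rfl, by
    rintro a rfl b rfl
    simpa using hε⟩

theorem ConnNear.symm {Y : Type*} [MetricSpace Y] {ε : ℝ} {x y : Y} (h : ConnNear ε x y) :
    ConnNear ε y x := by
  obtain ⟨C, h1, hx, hy, h⟩ := h
  exact ⟨C, h1, hy, hx, h⟩

/-- A compact locally connected space is uniformly locally connected. -/
theorem exists_delta_connNear {Y : Type*} [MetricSpace Y] [CompactSpace Y]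
    [LocallyConnectedSpace Y] {ε : ℝ} (hε : 0 < ε) :
    ∃ δ > 0, ∀ x y : Y, dist x y < δ → ConnNear ε x y := by
  obtain ⟨δ, hδ, h⟩ := lebesgue_number_lemma_of_metric (isCompact_univ (X := Y))
    (c := fun x : Y => connectedComponentIn (Metric.ball x (ε / 2)) x)
    (fun x => Metric.isOpen_ball.connectedComponentIn)
    (fun x _ => mem_iUnion.2 ⟨x, mem_connectedComponentIn (Metric.mem_ball_self (by linarith))⟩)
  refine ⟨δ, hδ, fun x y hxy => ?_⟩
  obtain ⟨z, hz⟩ := h x (mem_univ _)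
  refine ⟨_, isPreconnected_connectedComponentIn, hz (Metric.mem_ball_self hδ),
    hz (by rwa [Metric.mem_ball, dist_comm]), fun a ha b hb => ?_⟩
  have h1 := connectedComponentIn_subset _ _ ha
  have h2 := connectedComponentIn_subset _ _ hb
  rw [Metric.mem_ball] at h1 h2
  have := dist_triangle_right a b z
  linarith

/-- Two points of a small connected set are joined inside it by a chain of arbitrarily fine
mesh. -/
theorem ConnNear.exists_chain {Y : Type*} [MetricSpace Y] [CompactSpace Y]
    [LocallyConnectedSpace Y] {ε ε' : ℝ} (hε' : 0 < ε') {x y : Y} (h : ConnNear ε x y) :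
    ∃ (N : ℕ) (c : ℕ → Y), c 0 = x ∧ (∀ i ≥ N, c i = y) ∧
      (∀ i, ConnNear ε' (c i) (c (i + 1))) ∧ ∀ i, dist (c i) x ≤ ε := by
  obtain ⟨C, hC, hx, hy, hd⟩ := h
  obtain ⟨δ, hδ, hn⟩ := exists_delta_connNear (Y := Y) hε'
  have key : Relation.ReflTransGen (fun a b => b ∈ C ∧ ConnNear ε' a b) x y := by
    refine (hC.induction₂' (fun a b => a ∈ C → b ∈ C →
      Relation.ReflTransGen (fun a b => b ∈ C ∧ ConnNear ε' a b) a b) ?_ ?_ hx hy) hx hy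
    · intro a ha
      have : C ∩ Metric.ball a δ ∈ 𝓝[C] a :=
        Filter.inter_mem self_mem_nhdsWithin
          (mem_nhdsWithin_of_mem_nhds (Metric.ball_mem_nhds a hδ))
      filter_upwards [this] with b hb
      have hab : ConnNear ε' b a := hn _ _ hb.2
      exact ⟨fun _ h => .single ⟨h, hab.symm⟩, fun _ h => .single ⟨h, hab⟩⟩
    · intro a b c _ hb _ h1 h2 ha hc
      exact (h1 ha hb).trans (h2 hb hc)
  have main : ∃ (N : ℕ) (c : ℕ → Y), c 0 = x ∧ (∀ i ≥ N, c i = y) ∧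
      (∀ i, ConnNear ε' (c i) (c (i + 1))) ∧ ∀ i, c i ∈ C := by
    clear hy
    induction key with
    | refl => exact ⟨0, fun _ => x, rfl, fun _ _ => rfl, fun _ => .rfl' hε'.le _, fun _ => hx⟩
    | @tail b d _ hbd ih =>
      obtain ⟨N, c, h0, h1, h2, h3⟩ := ih
      refine ⟨N + 1, fun i => if i ≤ N then c i else d, by simpa using h0,
        fun i hi => by simp; omega, fun i => ?_, fun i => ?_⟩
      · rcases lt_trichotomy i N with hi | hi | hi
        · simpa [hi.le, Nat.succ_le_of_lt hi] using h2 i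
        · subst hi
          simpa [h1 i le_rfl] using hbd.2
        · have e1 : ¬ i ≤ N := by omega
          have e2 : ¬ i + 1 ≤ N := by omega
          simpa [e1, e2] using .rfl' hε'.le _
      · dsimp only
        split_ifs
        · exact h3 i
        · exact hbd.1
  obtain ⟨N, c, h0, h1, h2, h3⟩ := main
  exact ⟨N, c, h0, h1, h2, fun i => hd _ (h3 i) _ hx⟩

/-- Simultaneous refinement of all links of a finite chain, each into the same number of links. -/
theorem exists_refined_chain {Y : Type*} [MetricSpace Y] [CompactSpace Y]
    [LocallyConnectedSpace Y] {ε ε' : ℝ} (hε : 0 ≤ ε) (hε' : 0 < ε') {x y : Y} {K : ℕ} {g : ℕ → Y}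
    (h0 : g 0 = x) (h1 : ∀ i ≥ K, g i = y) (h2 : ∀ i, ConnNear ε (g i) (g (i + 1))) :
    ∃ (N : ℕ) (g' : ℕ → Y), 0 < N ∧ g' 0 = x ∧ (∀ i ≥ K * N, g' i = y) ∧
      (∀ i, ConnNear ε' (g' i) (g' (i + 1))) ∧ ∀ k, dist (g' k) (g (k / N)) ≤ ε := by
  have : ∃ (N : ℕ) (c : ℕ → ℕ → Y), 0 < N ∧ (∀ i, c i 0 = g i) ∧
      (∀ i, ∀ j ≥ N, c i j = g (i + 1)) ∧ (∀ i j, ConnNear ε' (c i j) (c i (j + 1))) ∧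
      (∀ i j, dist (c i j) (g i) ≤ ε) ∧ ∀ i ≥ K, ∀ j, c i j = y := by
    choose N c a1 a2 a3 a4 using fun i => (h2 i).exists_chain hε'
    refine ⟨(Finset.range K).sup N + 1, fun i => if i < K then c i else fun _ => y,
      by omega, fun i => ?_, fun i j hj => ?_, fun i j => ?_, fun i j => ?_, fun i hi j => ?_⟩
    · by_cases hi : i < K
      · simp [hi, a1]
      · simp [hi, h1 i (by omega)]
    · by_cases hi : i < K
      · have := Finset.le_sup (f := N) (Finset.mem_range.2 hi)
        simp [hi, a2 i j (by omega)]
      · simp [hi, h1 (i + 1) (by omega)]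
    · by_cases hi : i < K
      · simp [hi, a3]
      · simpa [hi] using .rfl' hε'.le _
    · by_cases hi : i < K
      · simp [hi, a4]
      · simpa [hi, h1 i (by omega)] using hε
    · simp [not_lt.2 hi]
  obtain ⟨N, c, hN, c0, c1, c2, c3, c4⟩ := this
  refine ⟨N, fun k => c (k / N) (k % N), hN, by simp [c0, h0], fun i hi => ?_, fun i => ?_,
    fun i => c3 _ _⟩
  · have hK : K ≤ i / N := (Nat.le_div_iff_mul_le hN).2 hi
    exact c4 _ hK _
  · dsimp only
    by_cases h : i % N + 1 < N
    · have e1 : (i + 1) / N = i / N := by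
        rw [Nat.succ_div_of_not_dvd]
        intro hd
        have := Nat.mod_eq_zero_of_dvd hd
        rw [Nat.add_mod, Nat.mod_eq_of_lt (a := 1) (by omega), Nat.mod_eq_of_lt h] at this
        omega
      have e2 : (i + 1) % N = i % N + 1 := by
        rw [Nat.add_mod, Nat.mod_eq_of_lt (a := 1) (by omega), Nat.mod_eq_of_lt h]
      rw [e1, e2]
      exact c2 _ _
    · have h' := Nat.mod_lt i hN
      have h'' : i % N + 1 = N := by omega
      have e0 : i + 1 = N * (i / N + 1) := by
        have := Nat.div_add_mod i N
        rw [mul_add]; omega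
      have := c2 (i / N) (i % N)
      rw [h'', c1 _ N le_rfl] at this
      rw [e0, Nat.mul_div_cancel_left _ hN, Nat.mul_mod_right, c0]
      exact this

/-- Nearby points are joined by a small path, the uniform limit of step functions along
successively refined chains. -/
theorem ConnNear.exists_path {Y : Type*} [MetricSpace Y] [CompactSpace Y]
    [LocallyConnectedSpace Y] {ε : ℝ} (hε : 0 < ε) {x y : Y} (hxy : ConnNear ε x y) :
    ∃ p : ℝ → Y, Continuous p ∧ p 0 = x ∧ p 1 = y ∧ ∀ t ∈ Icc (0:ℝ) 1, dist (p t) x ≤ 4 * ε := by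
  have hpos : ∀ n : ℕ, 0 < ε / 2 ^ n := fun n => by positivity
  let Lev : ℕ → ℕ × (ℕ → Y) → Prop := fun n q => 0 < q.1 ∧ q.2 0 = x ∧ (∀ i ≥ q.1, q.2 i = y) ∧
    ∀ i, ConnNear (ε / 2 ^ n) (q.2 i) (q.2 (i + 1))
  have step : ∀ n (q : {q // Lev n q}), ∃ q' : {q // Lev (n + 1) q}, ∃ N, 0 < N ∧
      q'.1.1 = q.1.1 * N ∧ ∀ k, dist (q'.1.2 k) (q.1.2 (k / N)) ≤ ε / 2 ^ n := by
    rintro n ⟨⟨K, g⟩, hK, h0, h1, h2⟩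
    obtain ⟨N, g', hN, a1, a2, a3, a4⟩ :=
      exists_refined_chain (hpos n).le (hpos (n + 1)) h0 h1 h2
    exact ⟨⟨⟨K * N, g'⟩, Nat.mul_pos hK hN, a1, a2, a3⟩, N, hN, rfl, a4⟩
  choose nxt hnxt using step
  let base : {q // Lev 0 q} := ⟨⟨1, fun i => if i = 0 then x else y⟩, one_pos, by simp,
    fun i hi => by
      have : i ≠ 0 := by dsimp at hi; omega
      simp [this], fun i => by
      by_cases hi : i = 0
      · simpa [hi] using hxy
      · simpa [hi] using .rfl' hε.le _⟩
  let S : ∀ n, {q // Lev n q} := fun n => Nat.rec base (fun n s => nxt n s) n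
  have hS : ∀ n, S (n + 1) = nxt n (S n) := fun n => rfl
  let K : ℕ → ℕ := fun n => (S n).1.1
  let g : ℕ → ℕ → Y := fun n => (S n).1.2
  have hK : ∀ n, 0 < K n := fun n => (S n).2.1
  have hg0 : ∀ n, g n 0 = x := fun n => (S n).2.2.1
  have hg1 : ∀ n, ∀ i ≥ K n, g n i = y := fun n => (S n).2.2.2.1
  have hg2 : ∀ n i, ConnNear (ε / 2 ^ n) (g n i) (g n (i + 1)) := fun n => (S n).2.2.2.2
  have hst : ∀ n, ∃ N, 0 < N ∧ K (n + 1) = K n * N ∧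
      ∀ k, dist (g (n + 1) k) (g n (k / N)) ≤ ε / 2 ^ n := fun n => hnxt n (S n)
  let γ : ℕ → ℝ → Y := fun n t => g n ⌊t * K n⌋₊
  have hγ : ∀ t n, dist (γ n t) (γ (n + 1) t) ≤ (2 * ε) / 2 / 2 ^ n := by
    intro t n
    obtain ⟨N, hN, hKN, hd⟩ := hst n
    have e : ⌊t * K (n + 1)⌋₊ / N = ⌊t * K n⌋₊ := by
      rw [← Nat.floor_div_natCast, hKN]
      congr 1
      push_cast
      have : (N : ℝ) ≠ 0 := by positivity
      field_simp
    have := hd ⌊t * K (n + 1)⌋₊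
    rw [e, dist_comm] at this
    simpa [γ] using this
  have hlim : ∀ t, ∃ z, Filter.Tendsto (fun n => γ n t) Filter.atTop (𝓝 z) := fun t =>
    cauchySeq_tendsto_of_complete (cauchySeq_of_le_geometric_two (hγ t))
  choose p hp using hlim
  have hdist : ∀ t n, dist (γ n t) (p t) ≤ 2 * ε / 2 ^ n := fun t n =>
    dist_le_of_le_geometric_two_of_tendsto (hγ t) (hp t) n
  have hp0 : p 0 = x := by
    refine tendsto_nhds_unique (hp 0) ?_
    simp [γ, hg0]
  have hp1 : p 1 = y := by
    refine tendsto_nhds_unique (hp 1) ?_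
    have : ∀ n, γ n 1 = y := fun n => by simp [γ, hg1 n (K n) le_rfl]
    simp [this]
  -- adjacent links of the `n`-th chain are close, which controls the limit path
  have hmod : ∀ n s t, |s - t| < 1 / (K n : ℝ) → dist (γ n s) (γ n t) ≤ ε / 2 ^ n := by
    intro n
    have aux : ∀ s t, s ≤ t → |s - t| < 1 / (K n : ℝ) → dist (γ n s) (γ n t) ≤ ε / 2 ^ n := by
      intro s t hle h
      have hKp : (0:ℝ) < K n := by exact_mod_cast hK n
      have hf1 : ⌊s * K n⌋₊ ≤ ⌊t * K n⌋₊ := Nat.floor_mono (by gcongr)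
      have hf2 : ⌊t * K n⌋₊ < ⌊s * K n⌋₊ + 2 := by
        rw [Nat.floor_lt' (by omega)]
        have h3 := Nat.lt_floor_add_one (s * K n)
        rw [abs_lt, lt_div_iff₀ hKp] at h
        have h4 : -(1 / (K n : ℝ)) * K n < (s - t) * K n := by
          exact mul_lt_mul_of_pos_right h.1 hKp
        rw [neg_mul, one_div_mul_cancel hKp.ne'] at h4
        push_cast
        nlinarith
      rcases (show ⌊t * K n⌋₊ = ⌊s * K n⌋₊ ∨ ⌊t * K n⌋₊ = ⌊s * K n⌋₊ + 1 by omega) with e | e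
      · simp only [γ, e, dist_self]
        exact (hpos n).le
      · simp only [γ, e]
        exact (hg2 n _).dist_le
    intro s t h
    rcases le_total s t with h' | h'
    · exact aux s t h' h
    · rw [dist_comm]
      exact aux t s h' (by rwa [abs_sub_comm])
  refine ⟨p, ?_, hp0, hp1, fun t ht => ?_⟩
  · rw [Metric.continuous_iff]
    intro t η hη
    obtain ⟨n, hn⟩ := exists_pow_lt_of_lt_one (show 0 < η / (5 * ε) by positivity)
      (show (1 / 2 : ℝ) < 1 by norm_num)
    have hKp : (0:ℝ) < K n := by exact_mod_cast hK n
    refine ⟨1 / K n, by positivity, fun s hs => ?_⟩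
    have h1 := hmod n s t (by rwa [Real.dist_eq] at hs)
    have h2 := hdist s n
    have h3 := hdist t n
    have h4 := dist_triangle4 (p s) (γ n s) (γ n t) (p t)
    rw [dist_comm (p s) (γ n s)] at h4
    have h5 : 5 * ε / 2 ^ n < η := by
      rw [lt_div_iff₀ (by positivity)] at hn
      calc 5 * ε / 2 ^ n = (1 / 2) ^ n * (5 * ε) := by rw [one_div, inv_pow]; field_simp
        _ < η := hn
    have h6 : 5 * ε / 2 ^ n = 2 * ε / 2 ^ n + ε / 2 ^ n + 2 * ε / 2 ^ n := by ring
    linarith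
  · have h1 := hdist t 0
    have h2 : dist (γ 0 t) x ≤ ε := by
      simp only [γ]
      rcases Nat.eq_zero_or_pos ⌊t * K 0⌋₊ with h | h
      · rw [h, hg0, dist_self]
        exact hε.le
      · rw [hg1 0 _ (show ⌊t * K 0⌋₊ ≥ K 0 from h), dist_comm]
        exact hxy.dist_le
    have h3 := dist_triangle_left (p t) x (γ 0 t)
    norm_num at h1
    linarith

/-- A Peano continuum, and more generally a compact metrizable locally connected space, is
locally path connected. -/
theorem locallyPathConnectedSpace_of_compact {Y : Type*} [MetricSpace Y] [CompactSpace Y]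
    [LocallyConnectedSpace Y] : LocallyPathConnectedSpace Y := by
  rw [locallyPathConnectedSpace_iff_pathComponentIn_mem_nhds]
  intro x u hu hx
  obtain ⟨r, hr, hru⟩ := Metric.isOpen_iff.1 hu x hx
  obtain ⟨δ, hδ, h⟩ := exists_delta_connNear (Y := Y) (show 0 < r / 8 by linarith)
  refine Filter.mem_of_superset (Metric.ball_mem_nhds x hδ) fun y hy => ?_
  obtain ⟨p, hp, h0, h1, hd⟩ :=
    (h x y (by rwa [dist_comm])).exists_path (show 0 < r / 8 by linarith)
  refine JoinedIn.ofLine hp.continuousOn h0 h1 ?_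
  rintro _ ⟨t, ht, rfl⟩
  apply hru
  have := hd t ht
  rw [Metric.mem_ball]
  linarith

/-! ### Spaces with unique arcs -/

/-- Any two distinct points are the ends of an arc contained in every connected set through
them. Dendrites and open intervals have this property. -/
def UniqueArcs (T : Type*) [TopologicalSpace T] : Prop :=
  ∀ x y : T, x ≠ y → ∃ γ : ℝ → T, Continuous γ ∧ InjOn γ (Icc 0 1) ∧ γ 0 = x ∧ γ 1 = y ∧
    ∀ K : Set T, IsPreconnected K → x ∈ K → y ∈ K → γ '' Icc 0 1 ⊆ K

/-- If a connected set through the ends of an arc `γ` missed a point of `γ`, there would be an arc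
`β` with the same ends missing that point; the gap of `γ` between its last and first meeting with
`β` around the point, closed up by a subarc of `β`, would be a circle. -/
theorem uniqueArcs_of_no_circle {T : Type*} [MetricSpace T] [LocallyPathConnectedSpace T]
    [ConnectedSpace T] (hcirc : ∀ C : Set T, ¬ IsCircleSet C) : UniqueArcs T := by
  intro x y hxy
  have : PathConnectedSpace T := pathConnectedSpace_iff_connectedSpace.2 inferInstance
  let q := PathConnectedSpace.somePath x y
  obtain ⟨γ, hγ, iγ, g0, g1, -⟩ := exists_arc_of_path (p := q.extend) q.continuous_extend
    (by simpa using hxy)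
  rw [q.extend_zero] at g0
  rw [q.extend_one] at g1
  refine ⟨γ, hγ, iγ, g0, g1, fun K hK hx hy => ?_⟩
  rintro _ ⟨t, ht, rfl⟩
  by_contra hz
  have hKz : K ⊆ {γ t}ᶜ := fun w hw h => hz (h ▸ hw)
  have hxU : x ∈ connectedComponentIn {γ t}ᶜ x := mem_connectedComponentIn (hKz hx)
  have hyU : y ∈ connectedComponentIn {γ t}ᶜ x := hK.subset_connectedComponentIn hx hKz hy
  have hUo : IsOpen (connectedComponentIn {γ t}ᶜ x) :=
    isOpen_compl_singleton.connectedComponentIn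
  have hUp : IsPathConnected (connectedComponentIn {γ t}ᶜ x) :=
    hUo.isConnected_iff_isPathConnected.1 ⟨⟨x, hxU⟩, isPreconnected_connectedComponentIn⟩
  have hj : JoinedIn (connectedComponentIn {γ t}ᶜ x) x y := hUp.joinedIn x hxU y hyU
  obtain ⟨β, hβ, iβ, b0, b1, hβr⟩ := exists_arc_of_path (p := hj.somePath.extend)
    hj.somePath.continuous_extend (by simpa using hxy)
  rw [hj.somePath.extend_zero] at b0
  rw [hj.somePath.extend_one] at b1
  have hβz : ∀ s, β s ≠ γ t := by
    intro s hs
    obtain ⟨w, hw, hw'⟩ := hβr (mem_range_self s)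
    have h1 := hj.somePath_mem (projIcc 0 1 zero_le_one w)
    have h2 := connectedComponentIn_subset _ _ h1
    exact h2 (hw'.trans hs)
  -- the gap of `β` along `γ` around time `t`
  have hBc : IsCompact (β '' Icc 0 1) := isCompact_Icc.image hβ
  have hcl : IsClosed (γ ⁻¹' (β '' Icc 0 1)) := hBc.isClosed.preimage hγ
  obtain ⟨u, ⟨hu, hub⟩, hug⟩ := (isCompact_Icc (a := 0) (b := t)).inter_right hcl |>.exists_isGreatest
    ⟨0, ⟨le_rfl, ht.1⟩, by rw [mem_preimage, g0, ← b0]; exact ⟨0, by simp, rfl⟩⟩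
  obtain ⟨v, ⟨hv, hvb⟩, hvg⟩ := (isCompact_Icc (a := t) (b := 1)).inter_right hcl |>.exists_isLeast
    ⟨1, ⟨ht.2, le_rfl⟩, by rw [mem_preimage, g1, ← b1]; exact ⟨1, by simp, rfl⟩⟩
  have htn : γ t ∉ β '' Icc 0 1 := by
    rintro ⟨s, -, hs⟩
    exact hβz s hs
  have hut : u < t := lt_of_le_of_ne hu.2 (by rintro rfl; exact htn hub)
  have htv : t < v := lt_of_le_of_ne hv.1 (by rintro rfl; exact htn hvb)
  have hgap : ∀ s ∈ Icc u v, γ s ∈ β '' Icc 0 1 → s = u ∨ s = v := by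
    intro s hs hsb
    rcases le_total s t with h | h
    · exact .inl (le_antisymm (hug ⟨⟨hu.1.trans hs.1, h⟩, hsb⟩) hs.1)
    · exact .inr (le_antisymm hs.2 (hvg ⟨⟨h, hs.2.trans hv.2⟩, hsb⟩))
  have huv : Icc u v ⊆ Icc 0 1 := Icc_subset_Icc hu.1 hv.2
  obtain ⟨p', hp', ep⟩ := hub
  obtain ⟨q', hq', eq⟩ := hvb
  have hpq : p' ≠ q' := by
    rintro rfl
    rw [ep] at eq
    have := iγ (huv ⟨le_rfl, by linarith⟩) (huv ⟨by linarith, le_rfl⟩) eq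
    linarith
  rcases lt_or_gt_of_ne hpq with h | h
  · have hsub : Icc p' q' ⊆ Icc 0 1 := Icc_subset_Icc hp'.1 hq'.2
    refine hcirc _ (isCircleSet_union_arcs (α := γ) (β := fun s => β (-s)) (a := u) (b := v)
      (c := -q') (d := -p') hγ (hβ.comp continuous_neg) (by linarith) (by linarith)
      (iγ.mono huv) ?_ (by simp [eq]) (by simp [ep]) ?_)
    · intro a ha b hb hab
      have := iβ (hsub ⟨by linarith [ha.2], by linarith [ha.1]⟩)
        (hsub ⟨by linarith [hb.2], by linarith [hb.1]⟩) hab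
      linarith
    · intro s hs r hr hsr
      have hr' : -r ∈ Icc 0 1 := hsub ⟨by linarith [hr.2], by linarith [hr.1]⟩
      rcases hgap s hs ⟨-r, hr', hsr.symm⟩ with rfl | rfl
      · right
        have := iβ hp' hr' (ep.trans hsr)
        exact ⟨rfl, by linarith⟩
      · left
        have := iβ hq' hr' (eq.trans hsr)
        exact ⟨rfl, by linarith⟩
  · have hsub : Icc q' p' ⊆ Icc 0 1 := Icc_subset_Icc hq'.1 hp'.2
    refine hcirc _ (isCircleSet_union_arcs (α := γ) (β := β) (a := u) (b := v)
      (c := q') (d := p') hγ hβ (by linarith) h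
      (iγ.mono huv) (iβ.mono hsub) eq.symm ep ?_)
    intro s hs r hr hsr
    rcases hgap s hs ⟨r, hsub hr, hsr.symm⟩ with rfl | rfl
    · exact .inr ⟨rfl, (iβ hp' (hsub hr) (ep.trans hsr)).symm⟩
    · exact .inl ⟨rfl, (iβ hq' (hsub hr) (eq.trans hsr)).symm⟩

theorem uniqueArcs_of_homeo_Ioo {T : Type*} [TopologicalSpace T] (e : T ≃ₜ Ioo (0:ℝ) 1) :
    UniqueArcs T := by
  intro x y hxy
  have hmem : ∀ t : ℝ, (e x : ℝ) + ((e y : ℝ) - e x) * (projIcc (0:ℝ) 1 zero_le_one t : ℝ) ∈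
      Ioo (0:ℝ) 1 := by
    intro t
    obtain ⟨h0, h1⟩ := (projIcc (0:ℝ) 1 zero_le_one t).2
    have hx := (e x).2
    have hy := (e y).2
    have := (convex_Ioo (0:ℝ) 1) hx hy (sub_nonneg.2 h1) h0 (by ring)
    simp only [smul_eq_mul] at this
    convert this using 1
    ring
  have hne : (e y : ℝ) - e x ≠ 0 := by
    intro h
    apply hxy
    apply e.injective
    apply Subtype.ext
    linarith
  refine ⟨fun t => e.symm ⟨_, hmem t⟩, ?_, ?_, ?_, ?_, ?_⟩
  · refine e.symm.continuous.comp (Continuous.subtype_mk ?_ _)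
    fun_prop
  · intro s hs t ht hst
    have h1 := congrArg Subtype.val (e.symm.injective hst)
    simp only [projIcc_of_mem _ hs, projIcc_of_mem _ ht] at h1
    have h2 : ((e y : ℝ) - e x) * s = ((e y : ℝ) - e x) * t := by linarith
    exact mul_left_cancel₀ hne h2
  · simp
  · simp
  · rintro K hK hx hy _ ⟨t, ht, rfl⟩
    have hK' : IsPreconnected ((fun w => (e w : ℝ)) '' K) :=
      hK.image _ (by fun_prop)
    have hoc := hK'.ordConnected
    have hm : ((e x : ℝ) + ((e y : ℝ) - e x) * (projIcc (0:ℝ) 1 zero_le_one t : ℝ)) ∈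
        (fun w => (e w : ℝ)) '' K := by
      obtain ⟨h0, h1⟩ := (projIcc (0:ℝ) 1 zero_le_one t).2
      have := hoc.uIcc_subset ⟨x, hx, rfl⟩ ⟨y, hy, rfl⟩
      apply this
      rw [mem_uIcc]
      rcases lt_or_gt_of_ne hne with h | h
      · right; constructor <;> nlinarith
      · left; constructor <;> nlinarith
    obtain ⟨w, hw, hw'⟩ := hm
    have : e w = ⟨_, hmem t⟩ := Subtype.ext hw'
    show e.symm ⟨_, hmem t⟩ ∈ K
    rw [← this]
    simpa using hw

/-- The set of points lying in every connected set that contains `x` and `y`; in a space with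
`UniqueArcs` it is the arc from `x` to `y`. -/
def ArcSeg {T : Type*} [TopologicalSpace T] (x y : T) : Set T :=
  {z | ∀ K : Set T, IsPreconnected K → x ∈ K → y ∈ K → z ∈ K}

section ArcSeg

variable {T : Type*} [TopologicalSpace T]

theorem left_mem_arcSeg (x y : T) : x ∈ ArcSeg x y := fun _ _ h _ => h

theorem right_mem_arcSeg (x y : T) : y ∈ ArcSeg x y := fun _ _ _ h => h

theorem arcSeg_comm (x y : T) : ArcSeg x y = ArcSeg y x :=
  Set.ext fun _ => ⟨fun h K hK a b => h K hK b a, fun h K hK a b => h K hK b a⟩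

theorem arcSeg_self (x : T) : ArcSeg x x = {x} := by
  apply Subset.antisymm
  · intro z hz
    exact hz {x} isPreconnected_singleton rfl rfl
  · rintro _ rfl
    exact left_mem_arcSeg _ _

theorem arcSeg_subset {x y : T} {K : Set T} (hK : IsPreconnected K) (hx : x ∈ K) (hy : y ∈ K) :
    ArcSeg x y ⊆ K := fun _ hz => hz K hK hx hy

theorem arcSeg_subset_arcSeg {x y w : T} (hw : w ∈ ArcSeg x y) : ArcSeg x w ⊆ ArcSeg x y :=
  fun _ hz K hK hx hy => hz K hK hx (hw K hK hx hy)

/-- In a space with unique arcs, `ArcSeg x y` is parametrized by an arc (a constant path if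
`x = y`), together with all its subarcs. -/
theorem UniqueArcs.exists_param [T2Space T] (h : UniqueArcs T) (x y : T) :
    ∃ γ : ℝ → T, Continuous γ ∧ γ 0 = x ∧ γ 1 = y ∧ (x ≠ y → InjOn γ (Icc 0 1)) ∧
      ∀ s ∈ Icc (0:ℝ) 1, ∀ t ∈ Icc (0:ℝ) 1, s ≤ t → ArcSeg (γ s) (γ t) = γ '' Icc s t := by
  by_cases hxy : x = y
  · subst hxy
    refine ⟨fun _ => x, continuous_const, rfl, rfl, fun h => (h rfl).elim, fun s _ t _ hst => ?_⟩
    rw [arcSeg_self, (nonempty_Icc.2 hst).image_const]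
  obtain ⟨γ, hγ, iγ, g0, g1, hK⟩ := h x y hxy
  refine ⟨γ, hγ, g0, g1, fun _ => iγ, fun s hs t ht hst => Subset.antisymm ?_ ?_⟩
  · exact arcSeg_subset (isPreconnected_Icc.image _ hγ.continuousOn) ⟨s, ⟨le_rfl, hst⟩, rfl⟩
      ⟨t, ⟨hst, le_rfl⟩, rfl⟩
  · rintro _ ⟨u, hu, rfl⟩ K hKc hsK htK
    have hu' : u ∈ Icc (0:ℝ) 1 := ⟨hs.1.trans hu.1, hu.2.trans ht.2⟩
    have hpre : ∀ a b, IsPreconnected (γ '' Icc a b) := fun a b =>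
      isPreconnected_Icc.image γ hγ.continuousOn
    have hs' : γ s ∈ γ '' Icc 0 s := mem_image_of_mem γ ⟨hs.1, le_rfl⟩
    have ht' : γ t ∈ γ '' Icc t 1 := mem_image_of_mem γ ⟨le_rfl, ht.2⟩
    have hp1 : IsPreconnected (γ '' Icc 0 s ∪ K) := (hpre 0 s).union (γ s) hs' hsK hKc
    have hp : IsPreconnected ((γ '' Icc 0 s ∪ K) ∪ γ '' Icc t 1) :=
      hp1.union (γ t) (.inr htK) ht' (hpre t 1)
    rcases hK _ hp (.inl (.inl ⟨0, ⟨le_rfl, hs.1⟩, g0⟩)) (.inr ⟨1, ⟨ht.2, le_rfl⟩, g1⟩)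
      ⟨u, hu', rfl⟩ with (⟨w, hw, e⟩ | h') | ⟨w, hw, e⟩
    · have := iγ ⟨hw.1, hw.2.trans hs.2⟩ hu' e
      have : u = s := le_antisymm (this ▸ hw.2) hu.1
      rwa [this]
    · exact h'
    · have := iγ ⟨ht.1.trans hw.1, hw.2⟩ hu' e
      have : u = t := le_antisymm hu.2 (this ▸ hw.1)
      rwa [this]

theorem UniqueArcs.isPreconnected_arcSeg [T2Space T] (h : UniqueArcs T) (x y : T) :
    IsPreconnected (ArcSeg x y) := by
  obtain ⟨γ, hγ, rfl, rfl, -, hb⟩ := h.exists_param x y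
  rw [hb 0 (by simp) 1 (by simp) zero_le_one]
  exact isPreconnected_Icc.image _ hγ.continuousOn

theorem UniqueArcs.isCompact_arcSeg [T2Space T] (h : UniqueArcs T) (x y : T) :
    IsCompact (ArcSeg x y) := by
  obtain ⟨γ, hγ, rfl, rfl, -, hb⟩ := h.exists_param x y
  rw [hb 0 (by simp) 1 (by simp) zero_le_one]
  exact isCompact_Icc.image hγ

theorem UniqueArcs.arcSeg_triangle [T2Space T] (h : UniqueArcs T) (x y z : T) :
    ArcSeg x z ⊆ ArcSeg x y ∪ ArcSeg y z :=
  arcSeg_subset ((h.isPreconnected_arcSeg x y).union y (right_mem_arcSeg _ _) (left_mem_arcSeg _ _)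
    (h.isPreconnected_arcSeg y z)) (.inl (left_mem_arcSeg _ _)) (.inr (right_mem_arcSeg _ _))

theorem UniqueArcs.arcSeg_antisymm [T2Space T] (h : UniqueArcs T) {c x y : T} (h1 : x ∈ ArcSeg c y)
    (h2 : y ∈ ArcSeg c x) : x = y := by
  obtain ⟨γ, hγ, rfl, rfl, iγ, hb⟩ := h.exists_param c y
  by_cases hxy : γ 0 = γ 1
  · rw [← hxy, arcSeg_self] at h1
    rw [h1, hxy]
  · rw [hb 0 (by simp) 1 (by simp) zero_le_one] at h1
    obtain ⟨s, hs, rfl⟩ := h1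
    rw [hb 0 (by simp) s hs hs.1] at h2
    obtain ⟨t, ht, e⟩ := h2
    have := iγ hxy ⟨ht.1, ht.2.trans hs.2⟩ (by simp) e
    have : s = 1 := le_antisymm hs.2 (this ▸ ht.2)
    rw [this]

/-- The points reached from `x` without passing `z` form the component of `x` in the complement
of `z`. -/
theorem UniqueArcs.setOf_notMem_arcSeg [T2Space T] (h : UniqueArcs T) (z x : T) :
    {y | z ∉ ArcSeg x y} = connectedComponentIn {z}ᶜ x := by
  ext y
  constructor
  · intro hy
    refine (h.isPreconnected_arcSeg x y).subset_connectedComponentIn (left_mem_arcSeg _ _) ?_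
      (right_mem_arcSeg _ _)
    rintro w hw rfl
    exact hy hw
  · intro hy hz
    have hx : x ∈ ({z}ᶜ : Set T) := connectedComponentIn_nonempty_iff.1 ⟨y, hy⟩
    have := hz _ isPreconnected_connectedComponentIn (mem_connectedComponentIn hx) hy
    exact connectedComponentIn_subset _ _ this rfl

theorem UniqueArcs.isPreconnected_setOf [T2Space T] (h : UniqueArcs T) (z x : T) :
    IsPreconnected {y | z ∉ ArcSeg x y} := by
  rw [h.setOf_notMem_arcSeg]
  exact isPreconnected_connectedComponentIn

theorem UniqueArcs.isOpen_setOf [T2Space T] [LocallyConnectedSpace T] (h : UniqueArcs T)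
    (z x : T) : IsOpen {y | z ∉ ArcSeg x y} := by
  rw [h.setOf_notMem_arcSeg]
  exact isOpen_compl_singleton.connectedComponentIn

/-- A point strictly between `x` and `y` stays between nearby points. -/
theorem UniqueArcs.eventually_mem_arcSeg [T2Space T] [LocallyConnectedSpace T] (h : UniqueArcs T)
    {x y z : T} (hz : z ∈ ArcSeg x y) (hzx : z ≠ x) (hzy : z ≠ y) :
    ∃ P Q : Set T, IsOpen P ∧ IsOpen Q ∧ x ∈ P ∧ y ∈ Q ∧ ∀ a ∈ P, ∀ b ∈ Q, z ∈ ArcSeg a b := by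
  refine ⟨_, _, h.isOpen_setOf z x, h.isOpen_setOf z y, ?_, ?_, fun a ha b hb => ?_⟩
  · simpa [arcSeg_self] using hzx
  · simpa [arcSeg_self] using hzy
  · rcases h.arcSeg_triangle x a y hz with h1 | h1
    · exact (ha h1).elim
    rcases h.arcSeg_triangle a b y h1 with h2 | h2
    · exact h2
    · rw [arcSeg_comm] at h2
      exact (hb h2).elim

/-- A compact set that is star-shaped about `c` has the fixed point property. Order the points by
`x ≤ y` if `x ∈ ArcSeg c y`; a maximal element of the closed set of points with `x ≤ f x` is
fixed. -/
theorem UniqueArcs.exists_fixedPoint [T2Space T] [LocallyConnectedSpace T] (h : UniqueArcs T)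
    {B : Set T} (hB : IsCompact B) {c : T} (hc : c ∈ B) (hstar : ∀ x ∈ B, ArcSeg c x ⊆ B)
    (f : B → B) (hf : Continuous f) : ∃ b, f b = b := by
  have hBc : CompactSpace B := isCompact_iff_compactSpace.1 hB
  let E : Set B := {x | (x : T) ∈ ArcSeg c (f x : T)}
  have hE : IsClosed E := by
    rw [← isOpen_compl_iff, isOpen_iff_mem_nhds]
    intro x hx
    have hx' : (x : T) ∉ ArcSeg c (f x : T) := hx
    -- a point of the arc from `c` to `x` beyond the arc from `c` to `f x` separates
    obtain ⟨z, hz, hzx, hzA⟩ : ∃ z ∈ ArcSeg c (x : T), z ≠ x ∧ z ∉ ArcSeg c (f x : T) := by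
      obtain ⟨γ, hγ, g0, g1, iγ, hb⟩ := h.exists_param c (x : T)
      have hcx : c ≠ x := by
        intro e
        apply hx'
        rw [← e]
        exact left_mem_arcSeg _ _
      have ho : IsOpen (γ ⁻¹' (ArcSeg c (f x : T))ᶜ) :=
        (h.isCompact_arcSeg _ _).isClosed.isOpen_compl.preimage hγ
      obtain ⟨s, ⟨hs0, hs1⟩, hs⟩ : ∃ s ∈ Ioo (0:ℝ) 1, γ s ∉ ArcSeg c (f x : T) := by
        have h1 : γ ⁻¹' (ArcSeg c (f x : T))ᶜ ∈ 𝓝[<] (1:ℝ) :=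
          mem_nhdsWithin_of_mem_nhds (ho.mem_nhds (by simpa [g1] using hx'))
        obtain ⟨s, hs, hs'⟩ := Filter.nonempty_of_mem
          (Filter.inter_mem h1 (Ioo_mem_nhdsLT (show (0:ℝ) < 1 by norm_num)))
        exact ⟨s, hs', hs⟩
      refine ⟨γ s, ?_, ?_, hs⟩
      · have := hb 0 (by simp) 1 (by simp) zero_le_one
        rw [g0, g1] at this
        rw [this]
        exact ⟨s, ⟨hs0.le, hs1.le⟩, rfl⟩
      · intro e
        have := iγ hcx ⟨hs0.le, hs1.le⟩ (by simp) (e.trans g1.symm)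
        exact hs1.ne this
    have n1 : ∀ᶠ x' : B in 𝓝 x, z ∉ ArcSeg (x : T) (x' : T) :=
      continuous_subtype_val.continuousAt.preimage_mem_nhds
        ((h.isOpen_setOf z x).mem_nhds (by simpa [arcSeg_self] using hzx))
    have n2 : ∀ᶠ x' : B in 𝓝 x, z ∉ ArcSeg c (f x' : T) :=
      (continuous_subtype_val.comp hf).continuousAt.preimage_mem_nhds
        ((h.isOpen_setOf z c).mem_nhds hzA)
    filter_upwards [n1, n2] with x' h1 h2 h3
    rcases h.arcSeg_triangle c x' x hz with h4 | h4
    · exact h2 (arcSeg_subset_arcSeg h3 h4)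
    · rw [arcSeg_comm] at h4
      exact h1 h4
  have hEc : (⟨c, hc⟩ : B) ∈ E := left_mem_arcSeg _ _
  obtain ⟨⟨x, hx⟩, hmax⟩ := exists_maximal_of_chains_bounded
    (r := fun x y : E => (x : T) ∈ ArcSeg c (y : T)) (by
      intro C hC
      rcases C.eq_empty_or_nonempty with rfl | hne
      · exact ⟨⟨_, hEc⟩, by simp⟩
      have : Nonempty C := hne.to_subtype
      have hcl : ∀ x : C, IsClosed (E ∩ {y : B | (x : T) ∈ ArcSeg c (y : T)}) := by
        intro x
        refine hE.inter ?_
        have : IsOpen ((fun y : B => (y : T)) ⁻¹' {y | (x : T) ∉ ArcSeg c y}) :=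
          (h.isOpen_setOf _ _).preimage continuous_subtype_val
        rw [← isOpen_compl_iff]
        exact this
      obtain ⟨u, hu⟩ := IsCompact.nonempty_iInter_of_directed_nonempty_isCompact_isClosed
        (fun x : C => E ∩ {y : B | (x : T) ∈ ArcSeg c (y : T)}) (by
          intro x y
          have htot : ((x.1 : B) : T) ∈ ArcSeg c ((y.1 : B) : T) ∨
              ((y.1 : B) : T) ∈ ArcSeg c ((x.1 : B) : T) := by
            by_cases e : x.1 = y.1
            · rw [e]
              exact .inl (right_mem_arcSeg _ _)
            · exact hC x.2 y.2 e
          rcases htot with hxy | hxy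
          · exact ⟨y, fun w hw => ⟨hw.1, arcSeg_subset_arcSeg hw.2 hxy⟩, fun w hw => hw⟩
          · exact ⟨x, fun w hw => hw, fun w hw => ⟨hw.1, arcSeg_subset_arcSeg hw.2 hxy⟩⟩)
        (fun x => ⟨x, x.1.2, right_mem_arcSeg _ _⟩) (fun x => (hcl x).isCompact) hcl
      rw [mem_iInter] at hu
      exact ⟨⟨u, (hu (Classical.arbitrary C)).1⟩, fun a ha => (hu ⟨a, ha⟩).2⟩)
    (fun h1 h2 => arcSeg_subset_arcSeg h2 h1)
  refine ⟨x, ?_⟩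
  by_contra hfx
  have hfx' : (f x : T) ≠ x := fun e => hfx (Subtype.ext e)
  have hxE : (x : T) ∈ ArcSeg c (f x : T) := hx
  have hcf : c ≠ f x := by
    intro e
    rw [← e, arcSeg_self] at hxE
    exact hfx' (e.symm.trans hxE.symm)
  obtain ⟨γ, hγ, g0, g1, iγ, hb⟩ := h.exists_param c (f x : T)
  replace iγ := iγ hcf
  have hb01 := hb 0 (by simp) 1 (by simp) zero_le_one
  rw [g0, g1] at hb01
  have hxE' := hxE
  rw [hb01] at hxE'
  obtain ⟨s, hs, hsx⟩ := hxE'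
  have hs1 : s < 1 := lt_of_le_of_ne hs.2 (by rintro rfl; exact hfx' (g1.symm.trans hsx))
  have hm : (s + 1) / 2 ∈ Icc (0:ℝ) 1 := ⟨by linarith [hs.1], by linarith⟩
  set z := γ ((s + 1) / 2) with hz
  have hzb : z ∈ ArcSeg c (f x : T) := by
    rw [hb01]
    exact ⟨_, hm, rfl⟩
  have hzf : z ≠ f x := by
    intro e
    have := iγ hm (by simp) (e.trans g1.symm)
    linarith
  -- the points of the arc just beyond `x` still lie in `E`
  have hγB : ∀ r : Icc (0:ℝ) 1, γ r ∈ B := fun r => hstar _ (f x).2 (by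
    rw [hb01]
    exact ⟨r, r.2, rfl⟩)
  let g : Icc (0:ℝ) 1 → B := fun r => ⟨γ r, hγB r⟩
  have hg : Continuous g := (hγ.comp continuous_subtype_val).subtype_mk _
  have hgs : g ⟨s, hs⟩ = x := Subtype.ext hsx
  have n1 : ∀ᶠ r in 𝓝 (⟨s, hs⟩ : Icc (0:ℝ) 1), z ∉ ArcSeg (f x : T) (f (g r) : T) := by
    refine (continuous_subtype_val.comp (hf.comp hg)).continuousAt.preimage_mem_nhds
      ((h.isOpen_setOf z (f x)).mem_nhds ?_)
    simpa [hgs, arcSeg_self] using hzf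
  rw [nhds_subtype_eq_comap, Filter.eventually_comap] at n1
  obtain ⟨r, hr, hr1⟩ := Filter.nonempty_of_mem (Filter.inter_mem
    (mem_nhdsWithin_of_mem_nhds n1 : _ ∈ 𝓝[>] s)
    (Ioo_mem_nhdsGT (show s < (s + 1) / 2 by linarith)))
  have hr01 : r ∈ Icc (0:ℝ) 1 := ⟨by linarith [hr1.1, hs.1], by linarith [hr1.2]⟩
  have hr2 := hr ⟨r, hr01⟩ rfl
  have hzc : z ∈ ArcSeg c (f (g ⟨r, hr01⟩) : T) := by
    rcases h.arcSeg_triangle c (f (g ⟨r, hr01⟩) : T) (f x) hzb with h1 | h1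
    · exact h1
    · rw [arcSeg_comm] at h1
      exact (hr2 h1).elim
  have e1 : ArcSeg c (γ r) = γ '' Icc 0 r := by
    rw [← hb 0 (by simp) r hr01 hr01.1, g0]
  have e2 : ArcSeg c z = γ '' Icc 0 ((s + 1) / 2) := by
    rw [← hb 0 (by simp) _ hm hm.1, g0]
  have hyE : g ⟨r, hr01⟩ ∈ E := by
    apply arcSeg_subset_arcSeg hzc
    rw [e2]
    exact ⟨r, ⟨hr01.1, hr1.2.le⟩, rfl⟩
  have hxy : (x : T) ∈ ArcSeg c (γ r) := by
    rw [e1]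
    exact ⟨s, ⟨hs.1, hr1.1.le⟩, hsx⟩
  have hyx := hmax ⟨g ⟨r, hr01⟩, hyE⟩ hxy
  have : (x : T) = γ r := h.arcSeg_antisymm hxy hyx
  have := iγ hs hr01 (hsx.trans this)
  linarith [hr1.1]

end ArcSeg

/-! ### Large closed sets contain free arcs or stars -/

theorem exists_mem_frontier {T : Type*} [TopologicalSpace T] {S N : Set T}
    (hS : IsPreconnected S) (hN : IsClosed N) {a b : T} (ha : a ∈ S) (haN : a ∈ interior N)
    (hb : b ∈ S) (hbN : b ∉ N) : ∃ z ∈ S, z ∈ frontier N := by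
  by_contra! hcon
  obtain ⟨z, -, hz1, hz2⟩ := hS (interior N) Nᶜ isOpen_interior hN.isOpen_compl (by
    intro z hz
    by_contra h'
    rw [mem_union, not_or, mem_compl_iff, not_not] at h'
    exact hcon z hz ⟨subset_closure h'.2, h'.1⟩) ⟨a, ha, haN⟩ ⟨b, hb, hbN⟩
  exact hz2 (interior_subset hz1)

/-- In a space with unique arcs, the component of `x` in the complement of `c` (empty if
`x = c`). -/
def Branch {T : Type*} [TopologicalSpace T] (c x : T) : Set T := {y | c ∉ ArcSeg x y}

theorem UniqueArcs.arcSeg_subset_branch {T : Type*} [TopologicalSpace T] [T2Space T]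
    (h : UniqueArcs T) {c x y : T} (hy : y ∈ Branch c x) : ArcSeg c y ⊆ insert c (Branch c x) := by
  intro z hz
  by_cases hzc : z = c
  · exact .inl hzc
  refine .inr fun hc => hzc ?_
  rcases h.arcSeg_triangle x y z hc with h1 | h1
  · exact (hy h1).elim
  · rw [arcSeg_comm] at hz
    exact h.arcSeg_antisymm hz h1

theorem UniqueArcs.mem_arcSeg_of_branch {T : Type*} [TopologicalSpace T] [T2Space T]
    (h : UniqueArcs T) {c x y w : T} (hy : y ∈ Branch c x) (hw : w ∉ Branch c x) :
    c ∈ ArcSeg y w := by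
  rcases h.arcSeg_triangle x y w (not_not.1 hw) with h1 | h1
  · exact (hy h1).elim
  · exact h1

theorem UniqueArcs.isClosed_insert_branch {T : Type*} [TopologicalSpace T] [T2Space T]
    [LocallyConnectedSpace T] (h : UniqueArcs T) (c x : T) :
    IsClosed (insert c (Branch c x)) := by
  rw [← isOpen_compl_iff, isOpen_iff_mem_nhds]
  intro y hy
  rw [mem_compl_iff, mem_insert_iff, not_or] at hy
  filter_upwards [(h.isOpen_setOf c y).mem_nhds (by simpa [arcSeg_self, eq_comm] using hy.1),
    isOpen_compl_singleton.mem_nhds (show y ∈ ({c}ᶜ : Set T) from hy.1)] with z hz hzc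
  rintro (h1 | h1)
  · exact hzc h1
  · have := h.mem_arcSeg_of_branch h1 hy.2
    rw [arcSeg_comm] at this
    exact hz this

theorem UniqueArcs.exists_interior_pt {T : Type*} [TopologicalSpace T] [T2Space T]
    (h : UniqueArcs T) {x y : T} (hxy : x ≠ y) : ∃ z ∈ ArcSeg x y, z ≠ x ∧ z ≠ y := by
  obtain ⟨γ, hγ, rfl, rfl, iγ, hb⟩ := h.exists_param x y
  refine ⟨γ (1 / 2), ?_, fun e => ?_, fun e => ?_⟩
  · rw [hb 0 (by simp) 1 (by simp) zero_le_one]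
    exact ⟨_, by norm_num, rfl⟩
  · have := iγ hxy (by norm_num) (by norm_num) e
    norm_num at this
  · have := iγ hxy (by norm_num) (by norm_num) e
    norm_num at this

/-- A set `M` all of whose points lie in connected subsets of `M` reaching the boundary of any
compact neighbourhood is locally arcwise connected, with arcs in small neighbourhoods. -/
theorem UniqueArcs.eventually_arcSeg_subset {T : Type*} [MetricSpace T]
    [LocallyConnectedSpace T] (h : UniqueArcs T) {M O : Set T} (hM : IsClosed M)
    (H : ∀ x ∈ M ∩ O, ∀ N, IsCompact N → N ⊆ O → x ∈ interior N →
      ∃ K, IsPreconnected K ∧ K ⊆ M ∩ N ∧ x ∈ K ∧ (K ∩ frontier N).Nonempty)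
    {c : T} {N : Set T} (hN : IsCompact N) (hNO : N ⊆ O) (hc : c ∈ interior N) :
    ∀ᶠ x in 𝓝 c, x ∈ M → ArcSeg c x ⊆ M ∩ N := by
  by_contra hcon
  rw [Filter.not_eventually] at hcon
  have hK : ∀ x, ∃ (K : Set T) (y : T), x ∈ M → x ∈ interior N → IsPreconnected K ∧ K ⊆ M ∩ N ∧
      x ∈ K ∧ y ∈ K ∧ y ∈ frontier N := by
    intro x
    by_cases hx : x ∈ M ∧ x ∈ interior N
    · obtain ⟨K, h1, h2, h3, y, h4, h5⟩ := H x ⟨hx.1, hNO (interior_subset hx.2)⟩ N hN hNO hx.2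
      exact ⟨K, y, fun _ _ => ⟨h1, h2, h3, h4, h5⟩⟩
    · exact ⟨∅, x, fun h1 h2 => (hx ⟨h1, h2⟩).elim⟩
  choose K y hKy using hK
  have hfr : ∃ᶠ x in 𝓝 c, x ∈ M ∧ ¬ ArcSeg c x ⊆ M ∩ N ∧ x ∈ interior N :=
    (hcon.and_eventually (isOpen_interior.mem_nhds hc)).mono fun x hx => by
      have := hx.1
      push Not at this
      exact ⟨this.1, this.2, hx.2⟩
  obtain ⟨x, hx, hxp⟩ := Filter.exists_seq_forall_of_frequently hfr
  have hNc : IsCompact (frontier N) :=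
    hN.of_isClosed_subset isClosed_frontier hN.isClosed.frontier_subset
  obtain ⟨b, hb, φ, hφ, hyb⟩ := hNc.tendsto_subseq
    (fun n => (hKy (x n) (hxp n).1 (hxp n).2.2).2.2.2.2)
  have hcb : c ≠ b := by
    rintro rfl
    exact disjoint_left.1 disjoint_interior_frontier hc hb
  have hxφ := hx.comp hφ.tendsto_atTop
  have hev : ∀ z ∈ ArcSeg c b, z ≠ c → z ≠ b → ∀ᶠ n in Filter.atTop, z ∈ K (x (φ n)) := by
    intro z hz hzc hzb
    obtain ⟨P, Q, hP, hQ, hcP, hbQ, hPQ⟩ := h.eventually_mem_arcSeg hz hzc hzb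
    filter_upwards [hxφ.eventually (hP.mem_nhds hcP), hyb.eventually (hQ.mem_nhds hbQ)] with n h1 h2
    obtain ⟨k1, -, k3, k4, -⟩ := hKy (x (φ n)) (hxp _).1 (hxp _).2.2
    exact hPQ _ h1 _ h2 _ k1 k3 k4
  have hcl : IsClosed (M ∩ N) := hM.inter hN.isClosed
  have hsub : ArcSeg c b ⊆ M ∩ N := by
    intro z hz
    by_cases hzc : z = c
    · subst hzc
      exact hcl.mem_of_tendsto hxφ (Filter.Eventually.of_forall fun n =>
        ⟨(hxp _).1, interior_subset (hxp _).2.2⟩)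
    by_cases hzb : z = b
    · subst hzb
      exact hcl.mem_of_tendsto hyb (Filter.Eventually.of_forall fun n => by
        obtain ⟨-, k2, -, k4, -⟩ := hKy (x (φ n)) (hxp _).1 (hxp _).2.2
        exact k2 k4)
    obtain ⟨n, hn⟩ := (hev z hz hzc hzb).exists
    exact (hKy (x (φ n)) (hxp _).1 (hxp _).2.2).2.1 hn
  obtain ⟨z, hz, hzc, hzb⟩ := h.exists_interior_pt hcb
  obtain ⟨n, hn⟩ := (hev z hz hzc hzb).exists
  obtain ⟨k1, k2, k3, k4, -⟩ := hKy (x (φ n)) (hxp _).1 (hxp _).2.2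
  refine (hxp (φ n)).2.1 ((arcSeg_subset ((h.isPreconnected_arcSeg c b).union z hz hn k1)
    (.inl (left_mem_arcSeg _ _)) (.inr k3)).trans (union_subset hsub k2))

/-- If the part of the arc `γ ⊆ M` over `(s, t)` is not relatively open in `M`, then a branch of the
tree that meets `M` and is disjoint from `γ` is attached at one of its points. -/
theorem UniqueArcs.exists_branch {T : Type*} [MetricSpace T]
    [LocallyConnectedSpace T] (h : UniqueArcs T) {M O : Set T} (hO : IsOpen O)
    {γ : ℝ → T} (hγ : Continuous γ) (iγ : InjOn γ (Icc 0 1)) (hγM : γ '' Icc 0 1 ⊆ M ∩ O)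
    (hb : ∀ s ∈ Icc (0:ℝ) 1, ∀ t ∈ Icc (0:ℝ) 1, s ≤ t → ArcSeg (γ s) (γ t) = γ '' Icc s t)
    {s t : ℝ} (hs : 0 < s) (hst : s < t) (ht : t < 1)
    (hno : ¬ ∃ G, IsOpen G ∧ G ⊆ O ∧ γ '' Ioo s t = G ∩ M) :
    ∃ u ∈ Ioo s t, ∃ x ∈ M, x ∈ Branch (γ u) x ∧ Disjoint (Branch (γ u) x) (γ '' Icc 0 1) := by
  have hst01 : Ioo s t ⊆ Icc 0 1 := fun r hr => ⟨by linarith [hr.1], by linarith [hr.2]⟩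
  -- a point of `γ` over `(s, t)` that is a limit of points of `M` off `γ`
  obtain ⟨r, hr, hrc⟩ : ∃ r ∈ Ioo s t, γ r ∈ closure (M \ γ '' Icc 0 1) := by
    by_contra! hcon
    apply hno
    let C : Set T := γ '' (Icc 0 s ∪ Icc t 1) ∪ closure (M \ γ '' Icc 0 1)
    have hC : IsClosed C :=
      ((isCompact_Icc.union isCompact_Icc).image hγ).isClosed.union isClosed_closure
    refine ⟨O ∩ Cᶜ, hO.inter hC.isOpen_compl, inter_subset_left, Subset.antisymm ?_ ?_⟩
    · rintro _ ⟨r, hr, rfl⟩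
      refine ⟨⟨(hγM ⟨r, hst01 hr, rfl⟩).2, ?_⟩, (hγM ⟨r, hst01 hr, rfl⟩).1⟩
      rintro (⟨r', hr' | hr', e⟩ | h1)
      · have := iγ ⟨hr'.1, by linarith [hr'.2]⟩ (hst01 hr) e
        linarith [hr'.2, hr.1]
      · have := iγ ⟨by linarith [hr'.1], hr'.2⟩ (hst01 hr) e
        linarith [hr'.1, hr.2]
      · exact hcon r hr h1
    · rintro z ⟨⟨-, hz⟩, hzM⟩
      have h1 : z ∉ closure (M \ γ '' Icc 0 1) := fun h => hz (.inr h)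
      have h2 : z ∈ γ '' Icc 0 1 := by
        by_contra h3
        exact h1 (subset_closure ⟨hzM, h3⟩)
      obtain ⟨r, hr, rfl⟩ := h2
      refine ⟨r, ⟨?_, ?_⟩, rfl⟩
      · by_contra! h4
        exact hz (.inl ⟨r, .inl ⟨hr.1, h4⟩, rfl⟩)
      · by_contra! h4
        exact hz (.inl ⟨r, .inr ⟨h4, hr.2⟩, rfl⟩)
  have hr01 := hst01 hr
  have hs01 : s ∈ Icc (0:ℝ) 1 := ⟨hs.le, by linarith⟩
  have ht01 : t ∈ Icc (0:ℝ) 1 := ⟨by linarith, ht.le⟩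
  have n1 := (h.isOpen_setOf (γ s) (γ r)).mem_nhds (x := γ r) (by
    rw [mem_ofPred_eq, arcSeg_self]
    intro e
    have := iγ hs01 hr01 e
    linarith [hr.1])
  have n2 := (h.isOpen_setOf (γ t) (γ r)).mem_nhds (x := γ r) (by
    rw [mem_ofPred_eq, arcSeg_self]
    intro e
    have := iγ ht01 hr01 e
    linarith [hr.2])
  obtain ⟨x, ⟨hxs, hxt⟩, hxM, hxγ⟩ := mem_closure_iff_nhds.1 hrc _ (Filter.inter_mem n1 n2)
  -- the last point of `γ` on the way from `γ r` to `x`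
  obtain ⟨δ, hδ, d0, d1, iδ, hdb⟩ := h.exists_param (γ r) x
  have hne : γ r ≠ x := by
    rintro rfl
    exact hxγ ⟨r, hr01, rfl⟩
  replace iδ := iδ hne
  have hcl : IsClosed (δ ⁻¹' (γ '' Icc 0 1)) := (isCompact_Icc.image hγ).isClosed.preimage hδ
  obtain ⟨w, ⟨hw, hwγ⟩, hwg⟩ := (isCompact_Icc (a := (0:ℝ)) (b := 1)).inter_right hcl
    |>.exists_isGreatest ⟨0, by simp, r, hr01, d0.symm⟩
  obtain ⟨u, hu, huw⟩ := hwγ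
  have hw1 : w < 1 := lt_of_le_of_ne hw.2 (by
    rintro rfl
    rw [d1] at huw
    exact hxγ ⟨u, hu, huw⟩)
  have hux : γ u ∈ ArcSeg (γ r) x := by
    have := hdb 0 (by simp) 1 (by simp) zero_le_one
    rw [d0, d1] at this
    rw [this, huw]
    exact ⟨w, hw, rfl⟩
  refine ⟨u, ⟨?_, ?_⟩, x, hxM, ?_, ?_⟩
  · by_contra! h1
    apply hxs
    apply arcSeg_subset_arcSeg hux
    rw [arcSeg_comm, hb u hu r hr01 (h1.trans hr.1.le)]
    exact ⟨s, ⟨h1, hr.1.le⟩, rfl⟩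
  · by_contra! h1
    apply hxt
    apply arcSeg_subset_arcSeg hux
    rw [hb r hr01 u hu (hr.2.le.trans h1)]
    exact ⟨t, ⟨hr.2.le, h1⟩, rfl⟩
  · rw [Branch, mem_ofPred_eq, arcSeg_self]
    intro e
    exact hxγ ⟨u, hu, e⟩
  · rw [disjoint_left]
    rintro _ hz ⟨v, hv, rfl⟩
    apply hz
    have hseg : ArcSeg (γ u) (γ v) ⊆ γ '' Icc 0 1 :=
      arcSeg_subset (isPreconnected_Icc.image γ hγ.continuousOn) ⟨u, hu, rfl⟩ ⟨v, hv, rfl⟩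
    have hmem : ∀ w' ∈ Ioo w 1, δ w' ∈ ArcSeg x (γ v) := by
      intro w' hw'
      have hw'1 : w' ∈ Icc (0:ℝ) 1 := ⟨hw.1.trans hw'.1.le, hw'.2.le⟩
      have h1 : δ w' ∈ ArcSeg (γ u) x := by
        have := hdb w hw 1 (by simp) hw.2
        rw [d1] at this
        rw [huw, this]
        exact ⟨w', ⟨hw'.1.le, hw'.2.le⟩, rfl⟩
      rcases h.arcSeg_triangle (γ u) (γ v) x h1 with h2 | h2
      · have := hwg ⟨hw'1, hseg h2⟩
        exact (not_le.2 hw'.1 this).elim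
      · rwa [arcSeg_comm]
    have hlim : Filter.Tendsto δ (𝓝[>] w) (𝓝 (γ u)) := by
      rw [huw]
      exact hδ.continuousAt.mono_left nhdsWithin_le_nhds
    refine (h.isCompact_arcSeg x (γ v)).isClosed.mem_of_tendsto hlim ?_
    filter_upwards [Ioo_mem_nhdsGT hw1] with w' hw'
    exact hmem w' hw'

/-- In a tree-like space, a closed set `M` whose components reach out of small neighbourhoods
contains either a relatively open arc, or a relatively open star-shaped piece attached at a single
point. If there is no open arc, then disjoint branches are attached to an arc in `M` at points
converging to a point `c0`; all but finitely many of them are small, and `M` meets a small one in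
the required piece. -/
theorem UniqueArcs.arc_or_star {T : Type*} [MetricSpace T] [LocallyConnectedSpace T]
    [LocallyCompactSpace T] (h : UniqueArcs T) {M O : Set T} (hM : IsClosed M) (hO : IsOpen O)
    (hne : (M ∩ O).Nonempty)
    (H : ∀ x ∈ M ∩ O, ∀ N, IsCompact N → N ⊆ O → x ∈ interior N →
      ∃ K, IsPreconnected K ∧ K ⊆ M ∩ N ∧ x ∈ K ∧ (K ∩ frontier N).Nonempty) :
    (∃ (γ : ℝ → T) (s t : ℝ) (G : Set T), Continuous γ ∧ s < t ∧ InjOn γ (Icc s t) ∧ IsOpen G ∧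
      G ⊆ O ∧ γ '' Icc s t ⊆ M ∧ γ '' Ioo s t = G ∩ M) ∨
    (∃ (B G : Set T) (c : T), IsCompact B ∧ c ∈ B ∧ B ⊆ M ∧ IsOpen G ∧ G ⊆ O ∧
      (B \ {c}).Nonempty ∧ B \ {c} = G ∩ M ∧ ∀ x ∈ B, ArcSeg c x ⊆ B) := by
  rw [or_iff_not_imp_left]
  intro hno
  obtain ⟨x0, hx0⟩ := hne
  obtain ⟨N0, hN0, hxN0, hN0O⟩ := exists_compact_subset hO hx0.2
  obtain ⟨K0, hK0, hK0M, hxK0, y0, hy0, hy0f⟩ := H x0 hx0 N0 hN0 hN0O hxN0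
  have hxy : x0 ≠ y0 := by
    rintro rfl
    exact disjoint_left.1 disjoint_interior_frontier hxN0 hy0f
  obtain ⟨γ, hγ, g0, g1, iγ, hb⟩ := h.exists_param x0 y0
  replace iγ := iγ hxy
  have hγM : γ '' Icc 0 1 ⊆ M ∩ O := by
    rw [← hb 0 (by simp) 1 (by simp) zero_le_one, g0, g1]
    exact (arcSeg_subset hK0 hxK0 hy0).trans (hK0M.trans (inter_subset_inter_right _ hN0O))
  have hbr : ∀ s t : ℝ, 0 < s → s < t → t < 1 → ∃ u ∈ Ioo s t, ∃ x ∈ M, x ∈ Branch (γ u) x ∧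
      Disjoint (Branch (γ u) x) (γ '' Icc 0 1) := by
    intro s t hs hst ht
    have hsub : Icc s t ⊆ Icc 0 1 := Icc_subset_Icc hs.le ht.le
    refine h.exists_branch hO hγ iγ hγM hb hs hst ht ?_
    rintro ⟨G, hG, hGO, hGM⟩
    exact hno ⟨γ, s, t, G, hγ, hst, iγ.mono hsub, hG, hGO,
      fun z hz => (hγM (image_mono hsub hz)).1, hGM⟩
  have hmid : (1 / 2 : ℝ) ∈ Icc (0:ℝ) 1 := by norm_num
  set c0 := γ (1 / 2) with hc0
  have hc0M : c0 ∈ M ∩ O := hγM ⟨_, hmid, rfl⟩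
  obtain ⟨N1, hN1, hcN1, hN1O⟩ := exists_compact_subset hO hc0M.2
  have hev := h.eventually_arcSeg_subset hM H hN1 hN1O hcN1
  obtain ⟨G, hGs, hG, hcG⟩ := mem_nhds_iff.1 hev
  obtain ⟨N, hN, hcN, hNG⟩ := exists_compact_subset (hG.inter hO) ⟨hcG, hc0M.2⟩
  -- pairwise disjoint branches attached at points of `γ` converging to `c0`
  have hseq : ∀ n : ℕ, ∃ u ∈ Ioo (1 / 2 + 1 / ((n:ℝ) + 4)) (1 / 2 + 1 / ((n:ℝ) + 3)), ∃ x ∈ M,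
      x ∈ Branch (γ u) x ∧ Disjoint (Branch (γ u) x) (γ '' Icc 0 1) := by
    intro n
    refine hbr _ _ (by positivity) ?_ ?_
    · have : 1 / ((n:ℝ) + 4) < 1 / ((n:ℝ) + 3) := by
        apply one_div_lt_one_div_of_lt <;> first | positivity | linarith
      linarith
    · have : 1 / ((n:ℝ) + 3) ≤ 1 / 3 := by
        apply one_div_le_one_div_of_le <;> [norm_num; linarith [(Nat.cast_nonneg n : (0:ℝ) ≤ n)]]
      linarith
  choose u hu x hxM hxB hdis using hseq
  have hu01 : ∀ n, u n ∈ Icc (0:ℝ) 1 := by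
    intro n
    have h1 := hu n
    have h2 : 1 / ((n:ℝ) + 3) ≤ 1 / 3 := by
      apply one_div_le_one_div_of_le <;> [norm_num; linarith [(Nat.cast_nonneg n : (0:ℝ) ≤ n)]]
    have h3 : 0 < 1 / ((n:ℝ) + 4) := by positivity
    exact ⟨by linarith [h1.1], by linarith [h1.2]⟩
  have huanti : StrictAnti u := by
    refine strictAnti_nat_of_succ_lt fun n => ?_
    have h1 := (hu (n + 1)).2
    have h2 := (hu n).1
    have : 1 / (((n + 1 : ℕ) : ℝ) + 3) = 1 / ((n:ℝ) + 4) := by push_cast; ring_nf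
    linarith
  have hcγ : ∀ n, γ (u n) ∈ γ '' Icc 0 1 := fun n => ⟨_, hu01 n, rfl⟩
  have hcne : ∀ n m, n ≠ m → γ (u n) ≠ γ (u m) := fun n m hnm e =>
    hnm (huanti.injective (iγ (hu01 n) (hu01 m) e))
  have hdisj : ∀ n m, n ≠ m → ∀ z, z ∈ insert (γ (u n)) (Branch (γ (u n)) (x n)) →
      z ∉ insert (γ (u m)) (Branch (γ (u m)) (x m)) := by
    rintro n m hnm z (rfl | h1) (h2 | h2)
    · exact hcne _ _ hnm h2
    · exact disjoint_left.1 (hdis m) h2 (hcγ n)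
    · exact disjoint_left.1 (hdis n) h1 (h2 ▸ hcγ m)
    · have h3 := h.mem_arcSeg_of_branch h1 (fun h' => disjoint_left.1 (hdis n) h' (hcγ m))
      rw [arcSeg_comm] at h3
      rcases h.arcSeg_subset_branch h2 h3 with h4 | h4
      · exact hcne _ _ hnm h4
      · exact disjoint_left.1 (hdis m) h4 (hcγ n)
  have hulim : Filter.Tendsto u Filter.atTop (𝓝 (1 / 2)) := by
    have e : ∀ k : ℝ, Filter.Tendsto (fun n : ℕ => 1 / 2 + 1 / ((n:ℝ) + k)) Filter.atTop
        (𝓝 (1 / 2)) := by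
      intro k
      have : Filter.Tendsto (fun n : ℕ => (n:ℝ) + k) Filter.atTop Filter.atTop :=
        Filter.tendsto_atTop_add_const_right _ _ tendsto_natCast_atTop_atTop
      have h1 := this.inv_tendsto_atTop.const_add (1 / 2 : ℝ)
      rw [add_zero] at h1
      simpa only [one_div, Pi.inv_apply] using h1
    exact tendsto_of_tendsto_of_tendsto_of_le_of_le (e 4) (e 3) (fun n => (hu n).1.le)
      (fun n => (hu n).2.le)
  have hclim : Filter.Tendsto (fun n => γ (u n)) Filter.atTop (𝓝 c0) :=
    (hγ.tendsto _).comp hulim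
  -- one of these branches is small
  obtain ⟨n, hnN, hnc⟩ : ∃ n, Branch (γ (u n)) (x n) ⊆ N ∧ γ (u n) ∈ interior N := by
    by_contra! hcon
    obtain ⟨n0, hn0⟩ := Filter.eventually_atTop.1
      (hclim.eventually (isOpen_interior.mem_nhds hcN))
    have hy : ∀ n, ∃ y ∈ frontier N,
        y ∈ Branch (γ (u (n + n0))) (x (n + n0)) := by
      intro n
      have h1 : γ (u (n + n0)) ∈ interior N := hn0 _ (by omega)
      have h2 : ¬ Branch (γ (u (n + n0))) (x (n + n0)) ⊆ N := fun h' => hcon _ h' h1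
      obtain ⟨y, hyB, hyN⟩ := not_subset.1 h2
      obtain ⟨z, hz, hzf⟩ := exists_mem_frontier
        (h.isPreconnected_arcSeg (γ (u (n + n0))) y) hN.isClosed (left_mem_arcSeg _ _) h1
        (right_mem_arcSeg _ _) hyN
      rcases h.arcSeg_subset_branch hyB hz with h3 | h3
      · exact (disjoint_left.1 disjoint_interior_frontier h1 (h3 ▸ hzf)).elim
      · exact ⟨z, hzf, h3⟩
    choose y hyf hyB using hy
    have hNc : IsCompact (frontier N) :=
      hN.of_isClosed_subset isClosed_frontier hN.isClosed.frontier_subset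
    obtain ⟨b, hbf, φ, hφ, hyb⟩ := hNc.tendsto_subseq hyf
    have hcb : c0 ≠ b := by
      intro e
      exact disjoint_left.1 disjoint_interior_frontier hcN (e ▸ hbf)
    obtain ⟨z, hz, hzc, hzb⟩ := h.exists_interior_pt hcb
    obtain ⟨P, Q, hP, hQ, hcP, hbQ, hPQ⟩ := h.eventually_mem_arcSeg hz hzc hzb
    have hcφ : Filter.Tendsto (fun n => γ (u (φ n + n0))) Filter.atTop (𝓝 c0) :=
      hclim.comp (Filter.tendsto_atTop_mono (fun n => Nat.le_add_right _ _) hφ.tendsto_atTop)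
    obtain ⟨k, hk⟩ := Filter.eventually_atTop.1
      ((hcφ.eventually (hP.mem_nhds hcP)).and (hyb.eventually (hQ.mem_nhds hbQ)))
    have hmem : ∀ j ≥ k, z ∈ insert (γ (u (φ j + n0)))
        (Branch (γ (u (φ j + n0))) (x (φ j + n0))) := fun j hj =>
      h.arcSeg_subset_branch (hyB (φ j)) (hPQ _ (hk j hj).1 _ (hk j hj).2)
    refine hdisj (φ k + n0) (φ (k + 1) + n0) ?_ z (hmem k le_rfl) (hmem (k + 1) (by omega))
    have := hφ (Nat.lt_succ_self k)
    have : φ k < φ (k + 1) := this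
    omega
  set c := γ (u n) with hcdef
  have hcN' : c ∈ N := interior_subset hnc
  have hcB : c ∉ Branch c (x n) := fun h' => h' (right_mem_arcSeg _ _)
  have hins : insert c (Branch c (x n)) ⊆ N := insert_subset hcN' hnN
  have hdiff : (M ∩ insert c (Branch c (x n))) \ {c} = Branch c (x n) ∩ M := by
    ext z
    constructor
    · rintro ⟨⟨h1, h2 | h2⟩, h3⟩
      · exact (h3 h2).elim
      · exact ⟨h2, h1⟩
    · rintro ⟨h1, h2⟩
      exact ⟨⟨h2, .inr h1⟩, fun h3 => hcB (h3 ▸ h1)⟩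
  refine ⟨M ∩ insert c (Branch c (x n)), Branch c (x n), c, ?_, ⟨(hγM (hcγ n)).1, .inl rfl⟩,
    inter_subset_left, h.isOpen_setOf _ _, fun z hz => (hNG (hnN hz)).2, ?_, hdiff, ?_⟩
  · exact hN.of_isClosed_subset (hM.inter (h.isClosed_insert_branch _ _))
      (inter_subset_right.trans hins)
  · rw [hdiff]
    exact ⟨x n, hxB n, hxM n⟩
  · rintro z ⟨hzM, rfl | hz⟩
    · rw [arcSeg_self, singleton_subset_iff]
      exact ⟨hzM, .inl rfl⟩
    · refine subset_inter ?_ (h.arcSeg_subset_branch hz)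
      have h1 : c ∈ ArcSeg z c0 := h.mem_arcSeg_of_branch hz
        (fun h' => disjoint_left.1 (hdis n) h' ⟨_, hmid, rfl⟩)
      have h2 : ArcSeg c0 z ⊆ M ∩ N1 := hGs (hNG (hnN hz)).1 hzM
      rw [arcSeg_comm c z]
      refine (arcSeg_subset_arcSeg h1).trans ?_
      rw [arcSeg_comm]
      exact h2.trans inter_subset_left

/-! ### Minimal systems containing an open arc or a star -/

section Minimal

variable {Z : Type*} [TopologicalSpace Z] {F : Z → Z}

theorem exists_iterate_mem (hF : Continuous F)
    (hmin : ∀ N : Set Z, N.Nonempty → IsClosed N → F '' N ⊆ N → N = univ)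
    (x : Z) {V : Set Z} (hV : IsOpen V) (hne : V.Nonempty) : ∃ n, 1 ≤ n ∧ F^[n] x ∈ V := by
  have h1 : closure {y | ∃ n, 1 ≤ n ∧ F^[n] x = y} = univ := by
    refine hmin _ (Set.Nonempty.closure ⟨F x, 1, le_rfl, rfl⟩) isClosed_closure ?_
    refine (image_closure_subset_closure_image hF).trans (closure_mono ?_)
    rintro _ ⟨_, ⟨n, hn, rfl⟩, rfl⟩
    exact ⟨n + 1, by omega, Function.iterate_succ_apply' F n x⟩
  obtain ⟨v, hv⟩ := hne
  have h2 : v ∈ closure {y | ∃ n, 1 ≤ n ∧ F^[n] x = y} := h1 ▸ mem_univ v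
  obtain ⟨_, hy, n, hn, rfl⟩ := mem_closure_iff.1 h2 V hV hv
  exact ⟨n, hn, hy⟩

theorem exists_bounded_iterate_mem [CompactSpace Z] (hF : Continuous F)
    (hmin : ∀ N : Set Z, N.Nonempty → IsClosed N → F '' N ⊆ N → N = univ)
    {V : Set Z} (hV : IsOpen V) (hne : V.Nonempty) : ∃ m, ∀ x, ∃ n ≤ m, F^[n] x ∈ V := by
  obtain ⟨t, ht⟩ := isCompact_univ.elim_finite_subcover (fun n : ℕ => F^[n] ⁻¹' V)
    (fun n => hV.preimage (hF.iterate n)) (fun x _ => by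
      obtain ⟨n, -, hn⟩ := exists_iterate_mem hF hmin x hV hne
      exact mem_iUnion.2 ⟨n, hn⟩)
  refine ⟨t.sup id, fun x => ?_⟩
  obtain ⟨n, hn, hx⟩ := mem_iUnion₂.1 (ht (mem_univ x))
  exact ⟨n, Finset.le_sup (f := id) hn, hx⟩

theorem finite_of_periodic [T1Space Z]
    (hmin : ∀ N : Set Z, N.Nonempty → IsClosed N → F '' N ⊆ N → N = univ)
    {b : Z} {n : ℕ} (hn : 1 ≤ n) (hb : F^[n] b = b) : Finite Z := by
  have hfin : ((fun i => F^[i] b) '' Iio n).Finite := (finite_Iio n).image _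
  have h0 : 0 ∈ Iio n := by
    show 0 < n
    omega
  have := hmin ((fun i => F^[i] b) '' Iio n) ⟨b, 0, h0, rfl⟩ hfin.isClosed (by
    rintro _ ⟨_, ⟨i, hi, rfl⟩, rfl⟩
    rw [mem_Iio] at hi
    rcases (show i + 1 < n ∨ i + 1 = n by omega) with h | h
    · exact ⟨i + 1, h, Function.iterate_succ_apply' F i b⟩
    · refine ⟨0, h0, ?_⟩
      show b = F (F^[i] b)
      rw [← Function.iterate_succ_apply' F i b, Nat.succ_eq_add_one, h, hb])
  rw [this] at hfin
  exact finite_univ_iff.1 hfin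

theorem finite_of_isOpen_singleton [T1Space Z] (hF : Continuous F)
    (hmin : ∀ N : Set Z, N.Nonempty → IsClosed N → F '' N ⊆ N → N = univ)
    {y : Z} (hy : IsOpen ({y} : Set Z)) : Finite Z := by
  obtain ⟨n, hn, h⟩ := exists_iterate_mem hF hmin y hy ⟨y, rfl⟩
  exact finite_of_periodic hmin hn h

/-- A minimal map is irreducible: no proper closed set has full image. If `F '' A` is everything,
then by compactness some orbit stays in `A`. -/
theorem eq_univ_of_image_eq_univ [CompactSpace Z] (hF : Continuous F) [Nonempty Z]
    (hmin : ∀ N : Set Z, N.Nonempty → IsClosed N → F '' N ⊆ N → N = univ)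
    {A : Set Z} (hA : IsClosed A) (hFA : F '' A = univ) : A = univ := by
  let S : ℕ → Set Z := fun k => {x | ∀ i ≤ k, F^[i] x ∈ A}
  have hS : ∀ k, IsClosed (S k) := by
    intro k
    have : S k = ⋂ i, ⋂ (_ : i ≤ k), F^[i] ⁻¹' A := by
      ext x
      simp [S]
    rw [this]
    exact isClosed_iInter fun i => isClosed_iInter fun _ => hA.preimage (hF.iterate i)
  have hSne : ∀ k, (S k).Nonempty := by
    have hsur : ∀ z, ∃ a ∈ A, F a = z := fun z => by
      have : z ∈ F '' A := hFA ▸ mem_univ z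
      exact this
    intro k
    induction k with
    | zero =>
      obtain ⟨a, ha, -⟩ := hsur (Classical.arbitrary Z)
      refine ⟨a, fun i hi => ?_⟩
      obtain rfl : i = 0 := by omega
      exact ha
    | succ k ih =>
      obtain ⟨x, hx⟩ := ih
      obtain ⟨a, ha, rfl⟩ := hsur x
      refine ⟨a, fun i hi => ?_⟩
      cases i with
      | zero => exact ha
      | succ i => exact hx i (by omega)
  have hne : (⋂ k, S k).Nonempty :=
    IsCompact.nonempty_iInter_of_sequence_nonempty_isCompact_isClosed S
      (fun k x hx i hi => hx i (by omega)) hSne (hS 0).isCompact hS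
  have := hmin _ hne (isClosed_iInter hS) (by
    rintro _ ⟨x, hx, rfl⟩
    rw [mem_iInter] at hx ⊢
    exact fun k i hi => hx (k + 1) (i + 1) (by omega))
  rw [eq_univ_iff_forall]
  intro x
  have hx : x ∈ ⋂ k, S k := this ▸ mem_univ x
  exact mem_iInter.1 hx 0 0 le_rfl

theorem eq_univ_of_iterate_image_eq_univ [CompactSpace Z] [T2Space Z] (hF : Continuous F)
    [Nonempty Z] (hmin : ∀ N : Set Z, N.Nonempty → IsClosed N → F '' N ⊆ N → N = univ)
    (n : ℕ) {A : Set Z} (hA : IsClosed A) (hFA : F^[n] '' A = univ) : A = univ := by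
  induction n with
  | zero => simpa using hFA
  | succ n ih =>
    apply ih
    rw [Function.iterate_succ', image_comp] at hFA
    exact eq_univ_of_image_eq_univ hF hmin (hA.isCompact.image (hF.iterate n)).isClosed hFA

/-- An infinite minimal system has no closed set with the fixed point property that becomes open
on removal of one point. -/
theorem false_of_fixedPoint [T1Space Z] [Infinite Z] (hF : Continuous F)
    (hmin : ∀ N : Set Z, N.Nonempty → IsClosed N → F '' N ⊆ N → N = univ)
    {B : Set Z} (hB : IsClosed B) {c : Z} (hc : c ∈ B) (hV : IsOpen (B \ {c}))
    (hne : (B \ {c}).Nonempty) (hfp : ∀ f : B → B, Continuous f → ∃ b, f b = b) : False := by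
  classical
  obtain ⟨k, hk, hkc⟩ := exists_iterate_mem hF hmin c hV hne
  let r : Z → Z := fun z => if z ∈ B \ {c} then z else c
  have hrB : ∀ z, r z ∈ B := by
    intro z
    by_cases hz : z ∈ B \ {c}
    · simp only [r, if_pos hz]
      exact hz.1
    · simp only [r, if_neg hz]
      exact hc
  -- collapsing the complement of `B \ {c}` to `c` is a continuous retraction onto `B`
  have hr : Continuous r := by
    rw [continuous_iff_isClosed]
    intro C hC
    by_cases hcC : c ∈ C
    · have : r ⁻¹' C = (B ∩ C) ∪ (B \ {c})ᶜ := by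
        ext z
        by_cases hz : z ∈ B \ {c}
        · simp only [r, mem_preimage, if_pos hz]
          exact ⟨fun h => .inl ⟨hz.1, h⟩, fun h => h.elim (fun h => h.2) fun h => (h hz).elim⟩
        · simp only [r, mem_preimage, if_neg hz]
          exact ⟨fun _ => .inr hz, fun _ => hcC⟩
      rw [this]
      exact (hB.inter hC).union hV.isClosed_compl
    · have : r ⁻¹' C = B ∩ C := by
        ext z
        by_cases hz : z ∈ B \ {c}
        · simp only [r, mem_preimage, if_pos hz, mem_inter_iff, hz.1, true_and]
        · simp only [r, mem_preimage, if_neg hz, hcC, false_iff]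
          rintro ⟨h1, h2⟩
          exact hz ⟨h1, fun h3 => hcC (h3 ▸ h2)⟩
      rw [this]
      exact hB.inter hC
  obtain ⟨b, hb⟩ := hfp (fun b => ⟨r (F^[k] b), hrB _⟩)
    ((hr.comp ((hF.iterate k).comp continuous_subtype_val)).subtype_mk _)
  have hb' : r (F^[k] b) = b := congrArg Subtype.val hb
  by_cases hz : F^[k] b ∈ B \ {c}
  · simp only [r, if_pos hz] at hb'
    have := finite_of_periodic hmin hk hb'
    exact not_finite Z
  · have hb'' := hb'
    simp only [r, if_neg hz] at hb''
    rw [← hb''] at hz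
    exact hz hkc

end Minimal

/-- For a continuous function with `g a = g b` there is a nonempty open set `O` of parameters such
that every value taken on `O` is also taken outside `O`. -/
theorem exists_open_redundant {g : ℝ → ℝ} {a b : ℝ} (hab : a < b) (hg : ContinuousOn g (Icc a b))
    (heq : g a = g b) : ∃ O : Set ℝ, IsOpen O ∧ O.Nonempty ∧ O ⊆ Icc a b ∧
      ∀ o ∈ O, ∃ o' ∈ Icc a b, o' ∉ O ∧ g o' = g o := by
  by_cases hconst : ∀ t ∈ Ioo a b, g t = g a
  · exact ⟨Ioo a b, isOpen_Ioo, nonempty_Ioo.2 hab, Ioo_subset_Icc_self, fun o ho =>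
      ⟨a, ⟨le_rfl, hab.le⟩, by simp, (hconst o ho).symm⟩⟩
  push Not at hconst
  obtain ⟨c, hc, hca⟩ := hconst
  have hs1 : Icc a c ⊆ Icc a b := Icc_subset_Icc_right hc.2.le
  have hs2 : Icc c b ⊆ Icc a b := Icc_subset_Icc_left hc.1.le
  refine ⟨Ioo c b ∩ g ⁻¹' Ioo (min (g a) (g c)) (max (g a) (g c)), ?_, ?_, ?_, ?_⟩
  · exact (hg.mono (Ioo_subset_Icc_self.trans hs2)).isOpen_inter_preimage isOpen_Ioo isOpen_Ioo
  · have hm : (g a + g c) / 2 ∈ uIcc (g c) (g b) := by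
      rw [← heq, mem_uIcc]
      rcases le_total (g a) (g c) with h | h
      · right; constructor <;> linarith
      · left; constructor <;> linarith
    have := intermediate_value_uIcc (f := g) (a := c) (b := b)
      (by rw [uIcc_of_le hc.2.le]; exact hg.mono hs2) hm
    obtain ⟨t, ht, hgt⟩ := this
    rw [uIcc_of_le hc.2.le] at ht
    have h1 : t ≠ c := by
      rintro rfl
      apply hca
      linarith
    have h2 : t ≠ b := by
      rintro rfl
      apply hca
      linarith
    refine ⟨t, ⟨lt_of_le_of_ne ht.1 h1.symm, lt_of_le_of_ne ht.2 h2⟩, ?_⟩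
    rw [mem_preimage, hgt, mem_Ioo, min_lt_iff, lt_max_iff]
    rcases lt_or_gt_of_ne hca with h | h
    · exact ⟨.inr (by linarith), .inl (by linarith)⟩
    · exact ⟨.inl (by linarith), .inr (by linarith)⟩
  · exact inter_subset_left.trans (Ioo_subset_Icc_self.trans hs2)
  · rintro o ⟨-, ho⟩
    have hm : g o ∈ uIcc (g a) (g c) := Ioo_subset_Icc_self ho
    have := intermediate_value_uIcc (f := g) (a := a) (b := c)
      (by rw [uIcc_of_le hc.1.le]; exact hg.mono hs1) hm
    obtain ⟨t, ht, hgt⟩ := this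
    rw [uIcc_of_le hc.1.le] at ht
    exact ⟨t, hs1 ht, fun h' => by linarith [ht.2, h'.1.1], hgt⟩

theorem isOpen_image_Ioo_of_injOn {g : ℝ → ℝ} {a b : ℝ} (hab : a < b)
    (hgc : ContinuousOn g (Icc a b)) (ginj : InjOn g (Icc a b)) : IsOpen (g '' Ioo a b) := by
  rcases hgc.strictMonoOn_of_injOn_Icc' hab.le ginj with hm | hm
  · have : g '' Ioo a b = Ioo (g a) (g b) := by
      refine Subset.antisymm ?_ (intermediate_value_Ioo hab.le hgc)
      rintro _ ⟨t, ht, rfl⟩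
      exact ⟨hm ⟨le_rfl, hab.le⟩ (Ioo_subset_Icc_self ht) ht.1,
        hm (Ioo_subset_Icc_self ht) ⟨hab.le, le_rfl⟩ ht.2⟩
    rw [this]
    exact isOpen_Ioo
  · have : g '' Ioo a b = Ioo (g b) (g a) := by
      refine Subset.antisymm ?_ (intermediate_value_Ioo' hab.le hgc)
      rintro _ ⟨t, ht, rfl⟩
      exact ⟨hm (Ioo_subset_Icc_self ht) ⟨hab.le, le_rfl⟩ ht.2,
        hm ⟨le_rfl, hab.le⟩ (Ioo_subset_Icc_self ht) ht.1⟩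
    rw [this]
    exact isOpen_Ioo

theorem exists_isOpenEmbedding_range_Ioo {a b : ℝ} (hab : a < b) :
    ∃ e : ℝ → ℝ, IsOpenEmbedding e ∧ range e = Ioo a b := by
  have hsm : StrictMono (fun t : ℝ => (a + b) / 2 + (b - a) / Real.pi * Real.arctan t) := by
    intro s t hst
    have h1 := Real.arctan_strictMono hst
    have h2 : 0 < (b - a) / Real.pi := div_pos (by linarith) Real.pi_pos
    have := mul_lt_mul_of_pos_left h1 h2
    dsimp only
    linarith
  have hr : range (fun t : ℝ => (a + b) / 2 + (b - a) / Real.pi * Real.arctan t) = Ioo a b := by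
    have hpi := Real.pi_pos
    apply Subset.antisymm
    · rintro _ ⟨t, rfl⟩
      have h1 := Real.neg_pi_div_two_lt_arctan t
      have h2 := Real.arctan_lt_pi_div_two t
      have h3 : 0 < (b - a) / Real.pi := div_pos (by linarith) hpi
      have e : (b - a) / Real.pi * Real.pi = b - a := by field_simp
      constructor <;> dsimp only <;> nlinarith
    · intro y hy
      have hy' : (y - (a + b) / 2) * Real.pi / (b - a) ∈ range Real.arctan := by
        rw [Real.range_arctan]
        have hba : 0 < b - a := by linarith
        constructor
        · rw [lt_div_iff₀ hba]
          nlinarith [hy.1]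
        · rw [div_lt_iff₀ hba]
          nlinarith [hy.2]
      obtain ⟨t, ht⟩ := hy'
      refine ⟨t, ?_⟩
      have hba : b - a ≠ 0 := by linarith
      dsimp only
      rw [ht]
      field_simp
      ring
  refine ⟨_, ⟨hsm.isEmbedding_of_ordConnected ?_, ?_⟩, hr⟩
  · rw [hr]
    exact ordConnected_Ioo
  · rw [hr]
    exact isOpen_Ioo

theorem exists_isOpenEmbedding_of_injOn {Z : Type*} [TopologicalSpace Z] [T2Space Z] {p : ℝ → Z}
    {a b : ℝ} (hab : a < b) (hp : ContinuousOn p (Icc a b)) (ip : InjOn p (Icc a b))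
    (ho : IsOpen (p '' Ioo a b)) : ∃ ψ : ℝ → Z, IsOpenEmbedding ψ ∧ range ψ = p '' Ioo a b := by
  obtain ⟨e, he, her⟩ := exists_isOpenEmbedding_range_Ioo hab
  have hmem : ∀ t, e t ∈ Icc a b := fun t => Ioo_subset_Icc_self (her ▸ mem_range_self t)
  have h1 : IsClosedEmbedding ((Icc a b).domRestrict p) :=
    hp.domRestrict.isClosedEmbedding ip.injective
  have h2 : IsEmbedding (codRestrict e (Icc a b) hmem) := he.isEmbedding.codRestrict _ _
  have h3 : range ((Icc a b).domRestrict p ∘ codRestrict e (Icc a b) hmem) = p '' Ioo a b := by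
    rw [← her, ← range_comp]
    rfl
  exact ⟨_, ⟨h1.isEmbedding.comp h2, h3 ▸ ho⟩, h3⟩

/-- If a minimal system contains an open arc, then every point `x` lies in an open arc. Pull `x`
back into the given arc by `j` steps and push it forward into the arc by `i` steps; read in the arc,
`F^[i + j]` is locally injective by irreducibility, so `F^[j]` maps a small arc injectively, and by
irreducibility again its image is the full preimage under `F^[i]` of an open arc. -/
theorem exists_openArc_through {Z : Type*} [TopologicalSpace Z] [T2Space Z] [CompactSpace Z]
    {F : Z → Z} (hF : Continuous F) (hsurj : Function.Surjective F)
    (hmin : ∀ N : Set Z, N.Nonempty → IsClosed N → F '' N ⊆ N → N = univ)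
    {φ : ℝ → Z} (hφ : IsOpenEmbedding φ) (x : Z) :
    ∃ ψ : ℝ → Z, IsOpenEmbedding ψ ∧ x ∈ range ψ := by
  have : Nonempty Z := ⟨x⟩
  have hV := hφ.isOpen_range
  have hVne : (range φ).Nonempty := range_nonempty _
  obtain ⟨i, -, hi⟩ := exists_iterate_mem hF hmin x hV hVne
  obtain ⟨j, s, hjs⟩ : ∃ j s, F^[j] (φ s) = x := by
    obtain ⟨m, hm⟩ := exists_bounded_iterate_mem hF hmin hV hVne
    obtain ⟨x', rfl⟩ := hsurj.iterate m x
    obtain ⟨n, hn, s, hs⟩ := hm x'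
    refine ⟨m - n, s, ?_⟩
    rw [hs, ← Function.iterate_add_apply]
    congr 1
    omega
  have hFc : Continuous fun t => F^[i] (F^[j] (φ t)) :=
    (hF.iterate i).comp ((hF.iterate j).comp hφ.continuous)
  have hW : (fun t => F^[i] (F^[j] (φ t))) ⁻¹' range φ ∈ 𝓝 s :=
    (hV.preimage hFc).mem_nhds (by
      show F^[i] (F^[j] (φ s)) ∈ range φ
      rwa [hjs])
  obtain ⟨δ, hδ, hδW⟩ := Metric.nhds_basis_closedBall.mem_iff.1 hW
  rw [Real.closedBall_eq_Icc] at hδW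
  set a := s - δ
  set b := s + δ
  have hab : a < b := by simp only [a, b]; linarith
  -- the map read in the chart `φ` at both ends
  obtain ⟨g, hg⟩ : ∃ g : ℝ → ℝ, ∀ t ∈ Icc a b, φ (g t) = F^[i] (F^[j] (φ t)) := by
    have : ∀ t, ∃ u, t ∈ Icc a b → φ u = F^[i] (F^[j] (φ t)) := by
      intro t
      by_cases ht : t ∈ Icc a b
      · obtain ⟨u, hu⟩ := hδW ht
        exact ⟨u, fun _ => hu⟩
      · exact ⟨0, fun h => (ht h).elim⟩
    choose g hg using this
    exact ⟨g, hg⟩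
  have hgc : ContinuousOn g (Icc a b) := by
    rw [hφ.isInducing.continuousOn_iff]
    exact hFc.continuousOn.congr fun t ht => hg t ht
  have hirr := fun n (A : Set Z) (hA : IsClosed A) (h : F^[n] '' A = univ) =>
    eq_univ_of_iterate_image_eq_univ hF hmin n hA h
  have ginj' : ∀ c ∈ Icc a b, ∀ d ∈ Icc a b, c < d → g c ≠ g d := by
    intro c hc d hd hcd heq
    have hsub : Icc c d ⊆ Icc a b := Icc_subset_Icc hc.1 hd.2
    obtain ⟨O, hO, ⟨o, ho⟩, hOs, hOr⟩ := exists_open_redundant hcd (hgc.mono hsub) heq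
    have := hirr (i + j) (φ '' O)ᶜ (hφ.isOpenMap O hO).isClosed_compl (by
      rw [eq_univ_iff_forall]
      intro z
      obtain ⟨w, rfl⟩ := hsurj.iterate (i + j) z
      by_cases hw : w ∈ φ '' O
      · obtain ⟨o, ho, rfl⟩ := hw
        obtain ⟨o', ho', ho'O, e⟩ := hOr o ho
        refine ⟨φ o', ?_, ?_⟩
        · rintro ⟨o'', h1, h2⟩
          exact ho'O (hφ.injective h2 ▸ h1)
        · rw [Function.iterate_add_apply, Function.iterate_add_apply, ← hg _ (hsub ho'),
            ← hg _ (hsub (hOs ho)), e]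
      · exact ⟨w, hw, rfl⟩)
    exact absurd (mem_univ (φ o)) (this ▸ fun h => h ⟨o, ho, rfl⟩)
  have ginj : InjOn g (Icc a b) := by
    intro c hc d hd e
    rcases lt_trichotomy c d with h | h | h
    · exact (ginj' c hc d hd h e).elim
    · exact h
    · exact (ginj' d hd c hc h e.symm).elim
  have hgo : IsOpen (g '' Ioo a b) := isOpen_image_Ioo_of_injOn hab hgc ginj
  have hsI : s ∈ Ioo a b := by simp only [a, b]; constructor <;> linarith
  have hpc : Continuous fun t => F^[j] (φ t) := (hF.iterate j).comp hφ.continuous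
  have hpi : InjOn (fun t => F^[j] (φ t)) (Icc a b) := by
    intro c hc d hd e
    apply ginj hc hd
    apply hφ.injective
    rw [hg c hc, hg d hd]
    exact congrArg _ e
  have hU1 : IsOpen (φ '' (g '' Ioo a b)) := hφ.isOpenMap _ hgo
  have hO' : IsOpen (F^[i] ⁻¹' (φ '' (g '' Ioo a b))) := hU1.preimage (hF.iterate i)
  have hA1 : IsClosed ((fun t => F^[j] (φ t)) '' Icc a b) :=
    (isCompact_Icc.image hpc).isClosed
  have hsub : F^[i] ⁻¹' (φ '' (g '' Ioo a b)) ⊆ (fun t => F^[j] (φ t)) '' Icc a b := by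
    intro z hz
    by_contra hzA
    have := hirr i (F^[i] ⁻¹' (φ '' (g '' Ioo a b)) \ (fun t => F^[j] (φ t)) '' Icc a b)ᶜ
      (hO'.sdiff hA1).isClosed_compl (by
      rw [eq_univ_iff_forall]
      intro z
      obtain ⟨w, rfl⟩ := hsurj.iterate i z
      by_cases hw : w ∈ F^[i] ⁻¹' (φ '' (g '' Ioo a b))
      · obtain ⟨_, ⟨t, ht, rfl⟩, e⟩ := hw
        refine ⟨F^[j] (φ t), fun h => h.2 ⟨t, Ioo_subset_Icc_self ht, rfl⟩, ?_⟩
        rw [← e, hg t (Ioo_subset_Icc_self ht)]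
      · exact ⟨w, fun h => hw h.1, rfl⟩)
    exact absurd (mem_univ z) (this ▸ fun h => h ⟨hz, hzA⟩)
  have heq : (fun t => F^[j] (φ t)) '' Ioo a b = F^[i] ⁻¹' (φ '' (g '' Ioo a b)) := by
    apply Subset.antisymm
    · rintro _ ⟨t, ht, rfl⟩
      exact ⟨g t, ⟨t, ht, rfl⟩, hg t (Ioo_subset_Icc_self ht)⟩
    · intro z hz
      obtain ⟨t, ht, rfl⟩ := hsub hz
      obtain ⟨_, ⟨u, hu, rfl⟩, e⟩ := hz
      rw [← hg t ht] at e
      have := ginj (Ioo_subset_Icc_self hu) ht (hφ.injective e)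
      exact ⟨t, this ▸ hu, rfl⟩
  obtain ⟨ψ, hψ, hψr⟩ := exists_isOpenEmbedding_of_injOn hab hpc.continuousOn hpi (heq ▸ hO')
  exact ⟨ψ, hψ, hψr ▸ ⟨s, hsI, hjs⟩⟩

/-! ### Compact one-dimensional manifolds -/

theorem locallyConnectedSpace_of_openArcs {T : Type*} [TopologicalSpace T]
    (hch : ∀ x : T, ∃ φ : ℝ → T, IsOpenEmbedding φ ∧ x ∈ range φ) : LocallyConnectedSpace T := by
  rw [locallyConnectedSpace_iff_subsets_isOpen_isConnected]
  intro x U hU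
  obtain ⟨φ, hφ, u, rfl⟩ := hch x
  obtain ⟨δ, hδ, h⟩ := Metric.mem_nhds_iff.1 (hφ.continuous.continuousAt.preimage_mem_nhds hU)
  rw [Real.ball_eq_Ioo] at h
  have hu : u ∈ Ioo (u - δ) (u + δ) := ⟨by linarith, by linarith⟩
  exact ⟨φ '' Ioo (u - δ) (u + δ), image_subset_iff.2 h, hφ.isOpenMap _ isOpen_Ioo,
    ⟨u, hu, rfl⟩, ⟨⟨_, u, hu, rfl⟩, isPreconnected_Ioo.image _ hφ.continuous.continuousOn⟩⟩

/-- Invariance of domain for circles in a one-dimensional manifold. -/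
theorem isOpen_of_isCircleSet {T : Type*} [TopologicalSpace T]
    (hch : ∀ x : T, ∃ φ : ℝ → T, IsOpenEmbedding φ ∧ x ∈ range φ) {S : Set T}
    (hS : IsCircleSet S) : IsOpen S := by
  obtain ⟨h⟩ := hS
  rw [isOpen_iff_mem_nhds]
  intro s hs
  obtain ⟨φ, hφ, u, hu⟩ := hch s
  set z : ℂ := (h ⟨s, hs⟩).1
  have hz : ‖z‖ = 1 := mem_sphere_zero_iff_norm.1 (h ⟨s, hs⟩).2
  have hmem : ∀ t : ℝ, z * Complex.exp (t * Complex.I) ∈ Metric.sphere (0:ℂ) 1 := by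
    intro t
    rw [mem_sphere_zero_iff_norm, norm_mul, hz, Complex.norm_exp_ofReal_mul_I, one_mul]
  let p : ℝ → T := fun t => h.symm ⟨_, hmem t⟩
  have hp : Continuous p := by
    refine continuous_subtype_val.comp (h.symm.continuous.comp (Continuous.subtype_mk ?_ _))
    fun_prop
  have hpS : ∀ t, p t ∈ S := fun t => (h.symm _).2
  have hp0 : p 0 = s := by
    have : (⟨_, hmem 0⟩ : Metric.sphere (0:ℂ) 1) = h ⟨s, hs⟩ := by
      apply Subtype.ext
      simp [z]
    simp only [p]
    rw [this, h.symm_apply_apply]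
  have hpi : InjOn p (Icc (-1) 1) := by
    intro a ha b hb e
    have e1 := congrArg Subtype.val (h.symm.injective (Subtype.ext e))
    have hz0 : z ≠ 0 := by
      intro h0
      simp [h0] at hz
    have e2 := mul_left_cancel₀ hz0 e1
    have hpi := Real.pi_gt_three
    have := Complex.exp_inj_of_neg_pi_lt_of_le_pi (by simp; linarith [ha.1])
      (by simp; linarith [ha.2]) (by simp; linarith [hb.1]) (by simp; linarith [hb.2]) e2
    simpa using this
  have hW : p ⁻¹' range φ ∈ 𝓝 (0:ℝ) :=
    (hφ.isOpen_range.preimage hp).mem_nhds (by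
      show p 0 ∈ range φ
      exact ⟨u, hu.trans hp0.symm⟩)
  obtain ⟨δ, hδ, hδW⟩ := Metric.nhds_basis_closedBall.mem_iff.1
    (Filter.inter_mem hW (Icc_mem_nhds (show (-1:ℝ) < 0 by norm_num) (zero_lt_one)))
  rw [Real.closedBall_eq_Icc, zero_sub, zero_add] at hδW
  obtain ⟨g, hg⟩ : ∃ g : ℝ → ℝ, ∀ t ∈ Icc (-δ) δ, φ (g t) = p t := by
    have : ∀ t, ∃ u, t ∈ Icc (-δ) δ → φ u = p t := by
      intro t
      by_cases ht : t ∈ Icc (-δ) δ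
      · obtain ⟨u, hu⟩ := (hδW ht).1
        exact ⟨u, fun _ => hu⟩
      · exact ⟨0, fun h => (ht h).elim⟩
    choose g hg using this
    exact ⟨g, hg⟩
  have hgc : ContinuousOn g (Icc (-δ) δ) := by
    rw [hφ.isInducing.continuousOn_iff]
    exact hp.continuousOn.congr fun t ht => hg t ht
  have hgi : InjOn g (Icc (-δ) δ) := by
    intro a ha b hb e
    apply hpi (hδW ha).2 (hδW hb).2
    rw [← hg a ha, ← hg b hb, e]
  have hgo := hφ.isOpenMap _ (isOpen_image_Ioo_of_injOn (by linarith) hgc hgi)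
  refine Filter.mem_of_superset (hgo.mem_nhds ⟨g 0, ⟨0, ⟨by linarith, hδ⟩, rfl⟩, ?_⟩) ?_
  · rw [hg 0 ⟨by linarith, hδ.le⟩, hp0]
  · rintro _ ⟨_, ⟨t, ht, rfl⟩, rfl⟩
    rw [hg t (Ioo_subset_Icc_self ht)]
    exact hpS t

/-- In a compact space with unique arcs, some point cannot be passed by arcs starting at `c`. -/
theorem UniqueArcs.exists_endpoint {T : Type*} [TopologicalSpace T] [T2Space T] [CompactSpace T]
    [LocallyConnectedSpace T] (h : UniqueArcs T) (c : T) :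
    ∃ x, ∀ y, x ∈ ArcSeg c y → x = y := by
  obtain ⟨x, hmax⟩ := exists_maximal_of_chains_bounded
    (r := fun x y : T => x ∈ ArcSeg c y) (by
      intro C hC
      rcases C.eq_empty_or_nonempty with rfl | hne
      · exact ⟨c, by simp⟩
      have : Nonempty C := hne.to_subtype
      have hcl : ∀ x : C, IsClosed {y : T | (x : T) ∈ ArcSeg c y} := by
        intro x
        rw [← isOpen_compl_iff]
        exact h.isOpen_setOf _ _
      obtain ⟨u, hu⟩ := IsCompact.nonempty_iInter_of_directed_nonempty_isCompact_isClosed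
        (fun x : C => {y : T | (x : T) ∈ ArcSeg c y}) (by
          intro x y
          have htot : (x : T) ∈ ArcSeg c (y : T) ∨ (y : T) ∈ ArcSeg c (x : T) := by
            by_cases e : (x : T) = y
            · rw [e]
              exact .inl (right_mem_arcSeg _ _)
            · exact hC x.2 y.2 e
          rcases htot with hxy | hxy
          · exact ⟨y, fun w hw => arcSeg_subset_arcSeg hw hxy, fun w hw => hw⟩
          · exact ⟨x, fun w hw => hw, fun w hw => arcSeg_subset_arcSeg hw hxy⟩)
        (fun x => ⟨x, right_mem_arcSeg _ _⟩) (fun x => (hcl x).isCompact) hcl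
      rw [mem_iInter] at hu
      exact ⟨u, fun a ha => hu ⟨a, ha⟩⟩)
    (fun h1 h2 => arcSeg_subset_arcSeg h2 h1)
  exact ⟨x, fun y hy => h.arcSeg_antisymm hy (hmax y hy)⟩

/-- A compact connected one-dimensional manifold is a circle: without circles it would have unique
arcs, but an endpoint of the resulting order cannot be interior to an open arc. -/
theorem isCircleSet_univ {T : Type*} [MetricSpace T] [CompactSpace T] [ConnectedSpace T]
    (hch : ∀ x : T, ∃ φ : ℝ → T, IsOpenEmbedding φ ∧ x ∈ range φ) :
    IsCircleSet (univ : Set T) := by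
  have := locallyConnectedSpace_of_openArcs hch
  have := locallyPathConnectedSpace_of_compact (Y := T)
  by_cases hcirc : ∀ C : Set T, ¬ IsCircleSet C
  · exfalso
    have h := uniqueArcs_of_no_circle hcirc
    obtain ⟨c⟩ := (inferInstance : Nonempty T)
    obtain ⟨x, hx⟩ := h.exists_endpoint c
    obtain ⟨φ, hφ, u, rfl⟩ := hch x
    have h1 : φ u ∈ ArcSeg (φ (u - 1)) (φ (u + 1)) := by
      have hpre := h.isPreconnected_arcSeg (φ (u - 1)) (φ (u + 1))
      have hsub : ArcSeg (φ (u - 1)) (φ (u + 1)) ⊆ range φ :=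
        arcSeg_subset (isPreconnected_range hφ.continuous) (mem_range_self _) (mem_range_self _)
      have := hpre.preimage_of_isOpenMap hφ.injective hφ.isOpenMap hsub
      exact this.ordConnected.out (left_mem_arcSeg _ _) (right_mem_arcSeg _ _)
        ⟨by linarith, by linarith⟩
    rcases h.arcSeg_triangle _ c _ h1 with h2 | h2
    · rw [arcSeg_comm] at h2
      have := hφ.injective (hx _ h2)
      linarith
    · have := hφ.injective (hx _ h2)
      linarith
  · push Not at hcirc
    obtain ⟨C, hC⟩ := hcirc
    have hCc : IsCompact C := by
      obtain ⟨e⟩ := hC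
      have : CompactSpace C := e.symm.compactSpace
      exact isCompact_iff_compactSpace.2 this
    have hne : C.Nonempty := by
      obtain ⟨e⟩ := hC
      exact ⟨_, (e.symm ⟨1, by simp⟩).2⟩
    have : C = univ := IsClopen.eq_univ ⟨hCc.isClosed, isOpen_of_isCircleSet hch hC⟩ hne
    exact this ▸ hC

theorem IsCircleSet.image {X Y : Type*} [TopologicalSpace X] [TopologicalSpace Y] {f : X → Y}
    (hf : IsEmbedding f) {C : Set X} (hC : IsCircleSet C) : IsCircleSet (f '' C) := by
  obtain ⟨e⟩ := hC
  exact ⟨(hf.homeomorphImage C).symm.trans e⟩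

/-- A compact one-dimensional manifold is a finite disjoint union of circles. -/
theorem finUnionDisjCircles_of_openArcs {X : Type*} [MetricSpace X] {M : Set X} (hM : IsCompact M)
    (hMne : M.Nonempty) (hch : ∀ x : M, ∃ φ : ℝ → M, IsOpenEmbedding φ ∧ x ∈ range φ) :
    FinUnionDisjCircles M := by
  have := isCompact_iff_compactSpace.1 hM
  have : Nonempty M := hMne.to_subtype
  have := locallyConnectedSpace_of_openArcs hch
  have hcirc : ∀ x : M, IsCircleSet (connectedComponent x) := by
    intro x
    have : CompactSpace (connectedComponent x) :=
      isCompact_iff_compactSpace.1 isClosed_connectedComponent.isCompact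
    have : ConnectedSpace (connectedComponent x) :=
      isConnected_iff_connectedSpace.1 isConnected_connectedComponent
    have h := isCircleSet_univ (T := connectedComponent x) (by
      rintro ⟨y, hy⟩
      obtain ⟨φ, hφ, u, rfl⟩ := hch y
      have hsub : ∀ t, φ t ∈ connectedComponent x := by
        intro t
        rw [connectedComponent_eq hy]
        exact (isPreconnected_range hφ.continuous).subset_connectedComponent (mem_range_self u)
          (mem_range_self t)
      refine ⟨codRestrict φ _ hsub, ⟨hφ.isEmbedding.codRestrict _ _, ?_⟩, u, rfl⟩
      have : range (codRestrict φ _ hsub) = Subtype.val ⁻¹' range φ := by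
        ext ⟨w, hw⟩
        simp [Subtype.ext_iff]
      rw [this]
      exact hφ.isOpen_range.preimage continuous_subtype_val)
    have := h.image IsEmbedding.subtypeVal
    rwa [image_univ, Subtype.range_coe] at this
  have hopen : ∀ x : M, IsOpen (connectedComponent x) := fun x => isOpen_connectedComponent
  have : Finite (ConnectedComponents M) := by
    infer_instance
  obtain ⟨n, ⟨e⟩⟩ := Finite.exists_equiv_fin (ConnectedComponents M)
  let D : ConnectedComponents M → Set M := fun q => ConnectedComponents.mk ⁻¹' {q}
  have hD : ∀ x : M, D (ConnectedComponents.mk x) = connectedComponent x := fun x =>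
    connectedComponents_preimage_singleton
  refine ⟨n, fun i => Subtype.val '' D (e.symm i), ?_, fun i => ?_, fun i j hij => ?_, ?_⟩
  · obtain ⟨x⟩ := this
    exact Fin.pos (e (ConnectedComponents.mk (Classical.arbitrary M)))
  · obtain ⟨x, hx⟩ := ConnectedComponents.surjective_coe (e.symm i)
    show IsCircleSet (Subtype.val '' D (e.symm i))
    rw [← hx, hD]
    exact (hcirc x).image IsEmbedding.subtypeVal
  · refine (disjoint_image_iff Subtype.val_injective).2 (Disjoint.preimage _ ?_)
    simpa using hij
  · rw [← image_iUnion]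
    have : ⋃ i, D (e.symm i) = univ := by
      rw [eq_univ_iff_forall]
      intro x
      exact mem_iUnion.2 ⟨e (ConnectedComponents.mk x), by simp [D]⟩
    rw [this, image_univ, Subtype.range_coe]

/-! ### Minimal sets with nondegenerate components -/

/-- If the degenerate components are not dense, then over some open set the components are
uniformly large. -/
theorem exists_open_large_components {Z : Type*} [MetricSpace Z] [CompactSpace Z]
    (hD : ¬ Dense {x : Z | connectedComponent x = {x}}) :
    ∃ V : Set Z, IsOpen V ∧ V.Nonempty ∧ ∃ η > 0, ∀ x ∈ V, ∃ y ∈ connectedComponent x,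
      η ≤ dist x y := by
  set D := {x : Z | connectedComponent x = {x}}
  -- for compact spaces, lying in the same component is a closed relation
  have hrel : IsClosed {p : Z × Z | p.2 ∈ connectedComponent p.1} := by
    have : {p : Z × Z | p.2 ∈ connectedComponent p.1} =
        ⋂ U : {U : Set Z // IsClopen U}, (Prod.fst ⁻¹' (U : Set Z)ᶜ ∪ Prod.snd ⁻¹' (U : Set Z)) := by
      ext ⟨x, y⟩
      rw [mem_ofPred_eq, connectedComponent_eq_iInter_isClopen]
      simp only [mem_iInter, mem_union, mem_preimage, mem_compl_iff, Subtype.forall]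
      constructor
      · intro h U hU
        by_cases hx : x ∈ U
        · exact .inr (h U ⟨hU, hx⟩)
        · exact .inl hx
      · intro h U hU
        exact (h U hU.1).resolve_left fun hx => hx hU.2
    rw [this]
    exact isClosed_iInter fun U => (U.2.compl.isClosed.preimage continuous_fst).union
      (U.2.isClosed.preimage continuous_snd)
  let E : ℕ → Set Z := fun n => {x | ∃ y ∈ connectedComponent x, 1 / ((n:ℝ) + 1) ≤ dist x y}
  have hE : ∀ n, IsClosed (E n) := by
    intro n
    have : E n = Prod.fst '' ({p : Z × Z | p.2 ∈ connectedComponent p.1} ∩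
        {p : Z × Z | 1 / ((n:ℝ) + 1) ≤ dist p.1 p.2}) := by
      ext x
      constructor
      · rintro ⟨y, hy, h⟩
        exact ⟨(x, y), ⟨hy, h⟩, rfl⟩
      · rintro ⟨⟨x', y⟩, ⟨hy, h⟩, rfl⟩
        exact ⟨y, hy, h⟩
    rw [this]
    exact ((hrel.inter (isClosed_le continuous_const continuous_dist)).isCompact.image
      continuous_fst).isClosed
  let f : Option ℕ → Set Z := fun o => o.elim (closure D) E
  have hf : ∀ o, IsClosed (f o) := by
    rintro (_ | n)
    · exact isClosed_closure
    · exact hE n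
  have hfU : ⋃ o, f o = univ := by
    rw [eq_univ_iff_forall]
    intro x
    by_cases hx : x ∈ D
    · exact mem_iUnion.2 ⟨none, subset_closure hx⟩
    · obtain ⟨y, hy, hyx⟩ : ∃ y ∈ connectedComponent x, y ≠ x := by
        by_contra! h
        exact hx (Subset.antisymm h (singleton_subset_iff.2 mem_connectedComponent))
      obtain ⟨n, hn⟩ := exists_nat_one_div_lt (dist_pos.2 hyx.symm)
      exact mem_iUnion.2 ⟨some n, y, hy, hn.le⟩
  obtain ⟨x, hx, hxD⟩ := (dense_iUnion_interior_of_closed hf hfU).exists_mem_open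
    (isClosed_closure (s := D)).isOpen_compl (by
      rw [nonempty_compl]
      exact fun h => hD (dense_iff_closure_eq.2 h))
  obtain ⟨o, ho⟩ := mem_iUnion.1 hx
  rcases o with _ | n
  · exact (hxD (interior_subset ho)).elim
  · exact ⟨interior (E n), isOpen_interior, ⟨x, ho⟩, 1 / ((n:ℝ) + 1), by positivity,
      fun z hz => (interior_subset hz : z ∈ E n)⟩

/-- If a nonempty open piece of an infinite minimal set lies in a uniquely arcwise connected
space and no component of the minimal set is contained in that piece, then the minimal set is a
finite union of circles. -/
theorem finUnionDisjCircles_of_uniqueArcs {X : Type*} [MetricSpace X] {M : Set X}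
    (hM : IsCompact M) [Infinite M] {F : M → M} (hF : Continuous F) (hsurj : Function.Surjective F)
    (hmin : ∀ N : Set M, N.Nonempty → IsClosed N → F '' N ⊆ N → N = univ)
    {T : Type*} [MetricSpace T] [LocallyConnectedSpace T] [LocallyCompactSpace T]
    (hT : UniqueArcs T) {ι : T → X} (hι : IsEmbedding ι) {W : Set X} (hW : IsOpen W)
    (hne : (M ∩ W).Nonempty) (hsub : M ∩ W ⊆ range ι)
    (hcc : ∀ x : M, (x : X) ∈ W → ∃ y ∈ connectedComponent x, (y : X) ∉ W) :
    FinUnionDisjCircles M := by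
  have hMc : CompactSpace M := isCompact_iff_compactSpace.1 hM
  have hopen : ∀ G : Set T, IsOpen G → G ⊆ ι ⁻¹' W →
      IsOpen ((fun m : M => (m : X)) ⁻¹' (ι '' (G ∩ ι ⁻¹' M))) := by
    intro G hG hGW
    obtain ⟨V, hV, rfl⟩ := hι.isInducing.isOpen_iff.1 hG
    have : (fun m : M => (m : X)) ⁻¹' (ι '' (ι ⁻¹' V ∩ ι ⁻¹' M)) =
        (fun m : M => (m : X)) ⁻¹' (V ∩ W) := by
      ext m
      constructor
      · rintro ⟨t, ⟨h1, h2⟩, h3⟩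
        have h4 := hGW h1
        rw [mem_preimage, h3] at h1 h4
        exact ⟨h1, h4⟩
      · rintro ⟨h1, h2⟩
        obtain ⟨t, ht⟩ := hsub ⟨m.2, h2⟩
        refine ⟨t, ⟨?_, ?_⟩, ht⟩
        · rwa [mem_preimage, ht]
        · rw [mem_preimage, ht]
          exact m.2
    rw [this]
    exact (hV.inter hW).preimage continuous_subtype_val
  have hclosed : ∀ A : Set T, IsCompact A → IsClosed ((fun m : M => (m : X)) ⁻¹' (ι '' A)) :=
    fun A hA => (hA.image hι.continuous).isClosed.preimage continuous_subtype_val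
  have hMT : IsClosed (ι ⁻¹' M) := hM.isClosed.preimage hι.continuous
  have hneT : (ι ⁻¹' M ∩ ι ⁻¹' W).Nonempty := by
    obtain ⟨m, hm⟩ := hne
    obtain ⟨t, rfl⟩ := hsub hm
    exact ⟨t, hm⟩
  rcases hT.arc_or_star hMT (hW.preimage hι.continuous) hneT (by
    intro x hx N hN hNO hxN
    have hK0 : IsCompact (ι ⁻¹' M ∩ N) := hN.inter_left hMT
    have : CompactSpace ↥(ι ⁻¹' M ∩ N) := isCompact_iff_compactSpace.1 hK0
    let x0 : ↥(ι ⁻¹' M ∩ N) := ⟨x, hx.1, interior_subset hxN⟩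
    refine ⟨Subtype.val '' connectedComponent x0,
      isPreconnected_connectedComponent.image _ continuous_subtype_val.continuousOn,
      Subtype.coe_image_subset _ _, ⟨x0, mem_connectedComponent, rfl⟩, ?_⟩
    by_contra hfr
    -- otherwise a clopen piece of the minimal set near `x` stays inside `W`
    have hint : connectedComponent x0 ⊆ Subtype.val ⁻¹' interior N := by
      intro z hz
      by_contra hzi
      exact hfr ⟨z, ⟨z, hz, rfl⟩, subset_closure z.2.2, hzi⟩
    rw [connectedComponent_eq_iInter_isClopen] at hint
    have : Nonempty {U : Set ↥(ι ⁻¹' M ∩ N) // IsClopen U ∧ x0 ∈ U} :=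
      ⟨⟨univ, isClopen_univ, mem_univ _⟩⟩
    obtain ⟨A, hA⟩ := exists_subset_nhds_of_isCompact
      (V := fun U : {U : Set ↥(ι ⁻¹' M ∩ N) // IsClopen U ∧ x0 ∈ U} => (U : Set _))
      (by
        rintro ⟨U, hU⟩ ⟨V, hV⟩
        exact ⟨⟨U ∩ V, hU.1.inter hV.1, hU.2, hV.2⟩, inter_subset_left, inter_subset_right⟩)
      (fun U => U.2.1.isClosed.isCompact)
      (U := Subtype.val ⁻¹' interior N)
      (fun z hz => (isOpen_interior.preimage continuous_subtype_val).mem_nhds (hint hz))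
    obtain ⟨A, hAc, hxA⟩ := A
    obtain ⟨G, hG, hGA⟩ := isOpen_induced_iff.1 hAc.isOpen
    have heq : Subtype.val '' A = (G ∩ interior N) ∩ ι ⁻¹' M := by
      ext z
      constructor
      · rintro ⟨z, hz, rfl⟩
        exact ⟨⟨hGA.symm.subset hz, hA hz⟩, z.2.1⟩
      · rintro ⟨⟨h1, h2⟩, h3⟩
        exact ⟨⟨z, h3, interior_subset h2⟩, hGA.subset h1, rfl⟩
    have hclo := hclosed _ (hAc.isClosed.isCompact.image continuous_subtype_val)
    have hGW : G ∩ interior N ⊆ ι ⁻¹' W :=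
      inter_subset_right.trans (interior_subset.trans hNO)
    have hop := hopen _ (hG.inter isOpen_interior) hGW
    rw [← heq] at hop
    obtain ⟨y, hy, hyW⟩ := hcc ⟨ι x, hx.1⟩ hx.2
    have hyA := IsClopen.connectedComponent_subset ⟨hclo, hop⟩
      (show (⟨ι x, hx.1⟩ : M) ∈ _ from ⟨x, ⟨x0, hxA, rfl⟩, rfl⟩) hy
    obtain ⟨t, ht, hty⟩ := hyA
    rw [heq] at ht
    have htW := hGW ht.1
    rw [mem_preimage, hty] at htW
    exact hyW htW) with
    ⟨γ, s, t, G, hγ, hst, iγ, hG, hGO, hγM, hγG⟩ | ⟨B, G, c, hB, hcB, hBM, hG, hGO, hBne, hBG, hstar⟩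
  · let p : ℝ → M := fun r => ⟨ι (γ (projIcc s t hst.le r)), hγM ⟨_, (projIcc s t hst.le r).2, rfl⟩⟩
    have hp : Continuous p := by
      refine Continuous.subtype_mk (hι.continuous.comp (hγ.comp ?_)) _
      exact continuous_subtype_val.comp continuous_projIcc
    have hpv : ∀ r ∈ Icc s t, (p r : X) = ι (γ r) := by
      intro r hr
      simp only [p]
      rw [projIcc_of_mem hst.le hr]
    have hpi : InjOn p (Icc s t) := by
      intro a ha b hb e
      have := congrArg Subtype.val e
      rw [hpv a ha, hpv b hb] at this
      exact iγ ha hb (hι.injective this)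
    have hpo : p '' Ioo s t = (fun m : M => (m : X)) ⁻¹' (ι '' (G ∩ ι ⁻¹' M)) := by
      rw [← hγG]
      ext m
      constructor
      · rintro ⟨r, hr, rfl⟩
        exact ⟨γ r, ⟨r, hr, rfl⟩, (hpv r (Ioo_subset_Icc_self hr)).symm⟩
      · rintro ⟨_, ⟨r, hr, rfl⟩, e⟩
        exact ⟨r, hr, Subtype.ext ((hpv r (Ioo_subset_Icc_self hr)).trans e)⟩
    obtain ⟨φ, hφ, -⟩ := exists_isOpenEmbedding_of_injOn hst hp.continuousOn hpi
      (hpo ▸ hopen G hG hGO)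
    exact finUnionDisjCircles_of_openArcs hM (hne.mono inter_subset_left)
      (exists_openArc_through hF hsurj hmin hφ)
  · exfalso
    have hBc : CompactSpace B := isCompact_iff_compactSpace.1 hB
    let B' : Set M := (fun m : M => (m : X)) ⁻¹' (ι '' B)
    let e0 : B → B' := fun b => ⟨⟨ι b, hBM b.2⟩, ⟨b, b.2, rfl⟩⟩
    have he0 : Continuous e0 :=
      ((hι.continuous.comp continuous_subtype_val).subtype_mk _).subtype_mk _
    have hbij : Function.Bijective e0 := by
      constructor
      · intro a b h
        have := congrArg (fun z : B' => ((z : M) : X)) h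
        exact Subtype.ext (hι.injective this)
      · rintro ⟨⟨m, hm⟩, b, hb, h⟩
        obtain rfl : ι b = m := h
        exact ⟨⟨b, hb⟩, rfl⟩
    let e : B ≃ₜ B' := Continuous.homeoOfEquivCompactToT2 (f := Equiv.ofBijective e0 hbij) he0
    have hdiff : B' \ {⟨ι c, hBM hcB⟩} = (fun m : M => (m : X)) ⁻¹' (ι '' (G ∩ ι ⁻¹' M)) := by
      rw [← hBG]
      ext m
      constructor
      · rintro ⟨⟨b, hb, h⟩, h2⟩
        refine ⟨b, ⟨hb, ?_⟩, h⟩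
        rintro rfl
        exact h2 (Subtype.ext h.symm)
      · rintro ⟨b, ⟨hb, hbc⟩, h⟩
        refine ⟨⟨b, hb, h⟩, ?_⟩
        intro h2
        have h3 : (m : X) = ι c := congrArg Subtype.val h2
        exact hbc (hι.injective (h.trans h3))
    refine false_of_fixedPoint hF hmin (hclosed B hB) (c := ⟨ι c, hBM hcB⟩) ⟨c, hcB, rfl⟩ ?_ ?_ ?_
    · exact hdiff ▸ hopen G hG hGO
    · obtain ⟨b, hb⟩ := hBne
      refine ⟨⟨ι b, hBM hb.1⟩, ⟨b, hb.1, rfl⟩, fun h => hb.2 ?_⟩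
      exact hι.injective (congrArg Subtype.val h)
    · intro f hf
      obtain ⟨b, hb⟩ := hT.exists_fixedPoint hB hcB hstar (fun b => e.symm (f (e b)))
        (e.symm.continuous.comp (hf.comp e.continuous))
      exact ⟨e b, by rw [← e.symm_apply_eq]; exact hb⟩

/-- A locally connected continuum with finitely many circles is locally uniquely arcwise
connected. -/
theorem exists_uniqueArcs_nhd {Y : Type*} [MetricSpace Y] [CompactSpace Y] [LocallyConnectedSpace Y]
    (hfin : {C : Set Y | IsCircleSet C}.Finite) (p : Y) :
    ∃ U : Set Y, IsOpen U ∧ p ∈ U ∧ UniqueArcs U := by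
  have := locallyPathConnectedSpace_of_compact (Y := Y)
  have hpt : ∀ C : Set Y, IsCircleSet C → ∃ q ∈ C, q ≠ p := by
    rintro C ⟨e⟩
    by_contra! h
    have h1 := (h _ (e.symm ⟨1, by simp⟩).2).trans (h _ (e.symm ⟨-1, by simp⟩).2).symm
    have h2 := congrArg Subtype.val (e.symm.injective (Subtype.ext h1))
    norm_num at h2
  have : Nonempty Y := ⟨p⟩
  choose! q hq hqp using hpt
  let O : Set Y := (q '' {C : Set Y | IsCircleSet C})ᶜ
  have hO : IsOpen O := (hfin.image q).isClosed.isOpen_compl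
  have hpO : p ∈ O := by
    rintro ⟨C, hC, h⟩
    exact hqp C hC h
  have hU : IsOpen (connectedComponentIn O p) := hO.connectedComponentIn
  refine ⟨connectedComponentIn O p, hU, mem_connectedComponentIn hpO, ?_⟩
  have := hU.locallyPathConnectedSpace
  have : ConnectedSpace (connectedComponentIn O p) :=
    isConnected_iff_connectedSpace.1 (isConnected_connectedComponentIn_iff.2 hpO)
  refine uniqueArcs_of_no_circle fun C hC => ?_
  have hC' := hC.image IsEmbedding.subtypeVal
  obtain ⟨z, hz, hzq⟩ := hq _ hC'
  exact connectedComponentIn_subset _ _ z.2 ⟨_, hC', hzq.symm⟩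

/-- If `X = L ∪ J ∪ R ∈ 𝒞` with `L, R` local dendrites, then every minimal set
on `X` is a finite set, a cantoroid, or a union of finitely many pairwise disjoint circles. -/
theorem stmt5 {X : Type*} [TopologicalSpace X] [CompactSpace X] [ConnectedSpace X]
    [TopologicalSpace.MetrizableSpace X] {L J R : Set X} (hC : ClassC L J R)
    (hLd : IsLocalDendrite L) (hRd : IsLocalDendrite R) :
    ∀ M ∈ MSpace X, M.Finite ∨ IsCantoroid M ∨ FinUnionDisjCircles M := by
  intro M hM
  let : MetricSpace X := TopologicalSpace.metrizableSpaceMetric X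
  obtain ⟨hMc, f, hf, hMne, hfM, hmin⟩ := hM
  by_cases hfin : M.Finite
  · exact .inl hfin
  right
  have hinf : Infinite M := infinite_coe_iff.2 hfin
  have hMcs : CompactSpace M := isCompact_iff_compactSpace.1 hMc
  have hmaps : MapsTo f M M := fun x hx => hfM.subset (mem_image_of_mem f hx)
  let F : M → M := hmaps.restrict f M M
  have hF : Continuous F := hf.restrict hmaps
  have hsurj : Function.Surjective F := by
    rintro ⟨y, hy⟩
    obtain ⟨x, hx, rfl⟩ := hfM.symm.subset hy
    exact ⟨⟨x, hx⟩, rfl⟩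
  have hmin' : ∀ N : Set M, N.Nonempty → IsClosed N → F '' N ⊆ N → N = univ := by
    intro N hN hNc hFN
    have h1 : Subtype.val '' N = M := by
      refine hmin _ (Subtype.coe_image_subset _ _) (hN.image _)
        (hNc.isCompact.image continuous_subtype_val).isClosed ?_
      rintro _ ⟨_, ⟨x, hx, rfl⟩, rfl⟩
      exact ⟨F x, hFN ⟨x, hx, rfl⟩, rfl⟩
    rw [eq_univ_iff_forall]
    intro x
    obtain ⟨y, hy, hyx⟩ := h1.symm.subset x.2
    rwa [← Subtype.ext hyx]
  by_cases hD : Dense {x : M | connectedComponent x = {x}}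
  · refine .inl ⟨hMne, hMc, fun y hy => ?_, hD⟩
    have := finite_of_isOpen_singleton hF hmin' hy
    exact not_finite M
  right
  obtain ⟨V, hV, ⟨v, hv⟩, η, hη, hlarge⟩ := exists_open_large_components hD
  obtain ⟨W, hW, rfl⟩ := isOpen_induced_iff.1 hV
  -- it suffices to find a uniquely arcwise connected subspace containing a piece of `M`
  have key : ∀ (T : Type _) [MetricSpace T] [LocallyConnectedSpace T] [LocallyCompactSpace T]
      (_ : UniqueArcs T) (ι : T → X) (_ : IsEmbedding ι) (W' : Set X) (_ : IsOpen W') (p : X)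
      (_ : p ∈ M) (_ : p ∈ W') (_ : M ∩ W' ⊆ range ι) (_ : W' ⊆ W), FinUnionDisjCircles M := by
    intro T _ _ _ hT ι hι W' hW' p hpM hpW' hsub hWW
    refine finUnionDisjCircles_of_uniqueArcs hMc hF hsurj hmin' hT hι
      (hW'.inter (Metric.isOpen_ball (x := p) (ε := η / 2))) ⟨p, hpM, hpW', Metric.mem_ball_self
        (half_pos hη)⟩ (fun x hx => hsub ⟨hx.1, hx.2.1⟩) ?_
    intro x hx
    obtain ⟨y, hy, hxy⟩ := hlarge x (hWW hx.1)
    refine ⟨y, hy, fun hyW => ?_⟩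
    have h1 := Metric.mem_ball.1 hx.2
    have h2 := Metric.mem_ball.1 hyW.2
    have h3 := dist_triangle_right (x : X) y p
    rw [Subtype.dist_eq] at hxy
    linarith
  have hdend : ∀ K : Set X, IsLocalDendrite K → ∀ (W' : Set X) (_ : IsOpen W') (p : X)
      (_ : p ∈ M) (_ : p ∈ W') (_ : M ∩ W' ⊆ K) (_ : W' ⊆ W), FinUnionDisjCircles M := by
    intro K ⟨hKc, hKconn, hKl, hKfin⟩ W' hW' p hpM hpW' hsub hWW
    have : CompactSpace K := isCompact_iff_compactSpace.1 hKc
    have hfinK : {C : Set K | IsCircleSet C}.Finite := by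
      refine Finite.of_finite_image (f := fun C : Set K => Subtype.val '' C) (hKfin.subset ?_)
        (Subtype.val_injective.image_injective.injOn)
      rintro _ ⟨C, hC, rfl⟩
      exact ⟨Subtype.coe_image_subset _ _, IsCircleSet.image IsEmbedding.subtypeVal hC⟩
    obtain ⟨U, hU, hpU, hUa⟩ := exists_uniqueArcs_nhd hfinK ⟨p, hsub ⟨hpM, hpW'⟩⟩
    have := hU.isOpenEmbedding_subtypeVal.locallyConnectedSpace
    have := hU.locallyCompactSpace
    obtain ⟨U', hU', rfl⟩ := isOpen_induced_iff.1 hU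
    refine key _ hUa _ (IsEmbedding.subtypeVal.comp IsEmbedding.subtypeVal) (W' ∩ U')
      (hW'.inter hU') p hpM ⟨hpW', hpU⟩ ?_ (inter_subset_left.trans hWW)
    rintro x ⟨hxM, hxW, hxU⟩
    exact ⟨⟨⟨x, hsub ⟨hxM, hxW⟩⟩, hxU⟩, rfl⟩
  by_cases hJ : (M ∩ (W ∩ J)).Nonempty
  · obtain ⟨p, hpM, hpW, hpJ⟩ := hJ
    obtain ⟨e⟩ := hC.freeJ
    have : LocallyConnectedSpace (Ioo (0:ℝ) 1) :=
      isOpen_Ioo.isOpenEmbedding_subtypeVal.locallyConnectedSpace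
    have := e.isOpenEmbedding.locallyConnectedSpace
    have := hC.openJ.locallyCompactSpace
    exact key J (uniqueArcs_of_homeo_Ioo e) _ IsEmbedding.subtypeVal (W ∩ J) (hW.inter hC.openJ) p
      hpM ⟨hpW, hpJ⟩ (fun x hx => ⟨⟨x, hx.2.2⟩, rfl⟩) inter_subset_left
  have hLR : ∀ x ∈ M, x ∈ W → x ∈ L ∨ x ∈ R := by
    intro x hxM hxW
    have hx : x ∈ L ∪ J ∪ R := hC.union_eq ▸ mem_univ x
    rcases hx with (hx | hx) | hx
    · exact .inl hx
    · exact (hJ ⟨x, hxM, hxW, hx⟩).elim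
    · exact .inr hx
  by_cases hR : M ∩ W ⊆ R
  · exact hdend R hRd W hW v v.2 hv hR Subset.rfl
  · rw [not_subset] at hR
    obtain ⟨p, ⟨hpM, hpW⟩, hpR⟩ := hR
    exact hdend L hLd (W \ R) (hW.sdiff hC.compactR.isClosed) p hpM ⟨hpW, hpR⟩
      (fun x hx => (hLR x hx.1 hx.2.1).resolve_right hx.2.2) sdiff_subset
end

section
/- Let X = L ∪ J ∪ R be a continuum in the class 𝒞, let f : X → X be a continuous map, and let M be a minimal set of (X, f) with M ∩ J ≠ ∅. If P denotes the path component of X containing J, then f(P) ⊆ P and M ⊆ P. -/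
/-!
The proof uses only that `J` is open and dense in the compact Hausdorff space `X`.

Minimality gives `f(M) = M`. If `f(P) ⊄ P`, then `f(P)`, being path connected, lies in another
path component, so `f(J)` misses `J`; as `J` is open and dense, `f(X)` misses `J`, contradicting
`M = f(M)` and `M ∩ J ≠ ∅`. Hence `f(P) ⊆ P`.

Every orbit in `M` is dense in `M`, so it visits `J`, and by compactness of `M` it does so within
a bounded time `n`. Since `M = fⁿ(M)`, every point of `M` is an iterate of a point of `J ⊆ P`
(`exists_iterate_eq_of_minimal`), hence lies in `P`.
-/

open Set Topology

/-- A minimal set of a continuous map on a compact Hausdorff space is mapped onto itself. -/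
theorem image_eq_of_minimal {X : Type*} [TopologicalSpace X] [CompactSpace X] [T2Space X]
    {f : X → X} (hf : Continuous f) {M : Set X} (hMne : M.Nonempty) (hMcl : IsClosed M)
    (hMinv : f '' M ⊆ M)
    (hMmin : ∀ N, N ⊆ M → N.Nonempty → IsClosed N → f '' N ⊆ N → N = M) :
    f '' M = M :=
  hMmin _ hMinv (hMne.image f) (hMcl.isCompact.image hf).isClosed (image_mono hMinv)

/-- Every point of a minimal set `M` that meets an open set `U` is an iterate of some point
of `U`. -/
theorem exists_iterate_eq_of_minimal {X : Type*} [TopologicalSpace X] [CompactSpace X] [T2Space X]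
    {f : X → X} (hf : Continuous f) {M : Set X} (hMne : M.Nonempty) (hMcl : IsClosed M)
    (hMinv : f '' M ⊆ M)
    (hMmin : ∀ N, N ⊆ M → N.Nonempty → IsClosed N → f '' N ⊆ N → N = M)
    {U : Set X} (hU : IsOpen U) (hMU : (M ∩ U).Nonempty) {y : X} (hy : y ∈ M) :
    ∃ z ∈ U, ∃ n : ℕ, f^[n] z = y := by
  have hmaps : MapsTo f M M := mapsTo_iff_image_subset.2 hMinv
  -- Orbits in `M` are dense in `M`, so each of them visits `U`.
  have hcover : M ⊆ ⋃ i : ℕ, f^[i] ⁻¹' U := by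
    intro x hx
    have hO : closure (range fun i : ℕ => f^[i] x) = M := by
      refine hMmin _ ?_ (range_nonempty _).closure isClosed_closure ?_
      · refine closure_minimal ?_ hMcl
        rintro _ ⟨i, rfl⟩
        exact hmaps.iterate i hx
      · refine (image_closure_subset_closure_image hf).trans (closure_mono ?_)
        rintro _ ⟨_, ⟨i, rfl⟩, rfl⟩
        exact ⟨i + 1, Function.iterate_succ_apply' f i x⟩
    obtain ⟨u, huM, huU⟩ := hMU
    obtain ⟨_, hwU, i, rfl⟩ := mem_closure_iff.1 (hO.symm ▸ huM) U hU huU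
    exact mem_iUnion.2 ⟨i, hwU⟩
  obtain ⟨t, ht⟩ := hMcl.isCompact.elim_finite_subcover _
    (fun i => hU.preimage (hf.iterate i)) hcover
  have hsurj : SurjOn f M M := (image_eq_of_minimal hf hMne hMcl hMinv hMmin).superset
  -- Go back `n = max t` steps from `y`; the forward orbit then visits `U` at some time `i ≤ n`.
  obtain ⟨x, hx, hxy⟩ := hsurj.iterate (t.sup id) hy
  obtain ⟨i, hit, hiU⟩ := mem_iUnion₂.1 (ht hx)
  refine ⟨f^[i] x, hiU, t.sup id - i, ?_⟩
  have hle : i ≤ t.sup id := Finset.le_sup (f := id) hit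
  rw [← Function.iterate_add_apply, Nat.sub_add_cancel hle, hxy]

/-- If `X = L ∪ J ∪ R ∈ 𝒞`, `f : X → X` is continuous, `M` is a minimal set
of `(X, f)` with `M ∩ J ≠ ∅`, and `P` is the path component of `X` containing `J`, then
`f(P) ⊆ P` and `M ⊆ P`. -/
theorem stmt15 {X : Type*} [TopologicalSpace X] [CompactSpace X] [ConnectedSpace X]
    [TopologicalSpace.MetrizableSpace X] {L J R : Set X} (hC : ClassC L J R)
    (f : X → X) (hf : Continuous f)
    (M : Set X) (hMne : M.Nonempty) (hMcl : IsClosed M) (hMinv : f '' M ⊆ M)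
    (hMmin : ∀ N, N ⊆ M → N.Nonempty → IsClosed N → f '' N ⊆ N → N = M)
    (hMJ : (M ∩ J).Nonempty)
    (P : Set X) (hP : ∃ x, P = pathComponent x) (hJP : J ⊆ P) :
    f '' P ⊆ P ∧ M ⊆ P := by
  obtain ⟨x₀, rfl⟩ := hP
  have hfP : f '' pathComponent x₀ ⊆ pathComponent x₀ := by
    rintro _ ⟨p, hp, rfl⟩
    by_contra hfp
    have hJJ : ∀ q ∈ J, f q ∈ Jᶜ := fun q hq hfq =>
      hfp ((hJP hfq).trans (((hJP hq).symm.trans hp).map hf))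
    have hall : ∀ q, f q ∈ Jᶜ := fun q =>
      closure_minimal hJJ (hC.openJ.isClosed_compl.preimage hf) (hC.denseJ q)
    obtain ⟨z, hzM, hzJ⟩ := hMJ
    obtain ⟨w, -, rfl⟩ := (image_eq_of_minimal hf hMne hMcl hMinv hMmin).superset hzM
    exact hall w hzJ
  refine ⟨hfP, fun y hy => ?_⟩
  obtain ⟨z, hz, n, rfl⟩ :=
    exists_iterate_eq_of_minimal hf hMne hMcl hMinv hMmin hC.openJ hMJ hy
  exact (mapsTo_iff_image_subset.2 hfP).iterate n (hJP hz)
end
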